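/- arXiv:2101.00623 — 3 statements merged into one kernel-verified Lean document; each statement's English description precedes it below -/
import Mathlib

section
/- Let g ∈ C²([0,∞)) satisfy g'(0) = 0, g''(t) > 0 for t > 0, a₁t − a₂ ≤ g(t) ≤ a₃t + a₄ for all t ≥ 0 (with constants a₁, a₃ > 0, a₂, a₄ ≥ 0), and g''(t) ≤ a₅(1+t)^(−μ) for all t ≥ 0 with a₅ > 0 and an exponent μ ≥ 3. Put F(Z) := g(|Z|) for Z ∈ ℝ². Then every C² solution u : ℝ² → ℝ of the equation div[∇F(∇u)] = 0 on ℝ² is an affine function. -/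
/-- `u : ℝ² → ℝ` solves `div[∇F(∇u)] = 0` on `ℝ²`:
`∑_α ∂_α[(∂F/∂Z_α)(∇u(x))] = 0` for all `x`. -/
noncomputable def IsScalarEulerSolution (F : EuclideanSpace ℝ (Fin 2) → ℝ)
    (u : EuclideanSpace ℝ (Fin 2) → ℝ) : Prop :=
  ∀ x : EuclideanSpace ℝ (Fin 2),
    ∑ α : Fin 2,
      fderiv ℝ (fun y => gradient F (gradient u y) α) x (EuclideanSpace.single α 1) = 0

/-
Write `Z = ∇u` and `σ = ∇F(Z)`, so `div σ = 0`. Testing the differentiated equation with the field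
`Φ = arctan(|Z|) Z / |Z|` and a cutoff `ω` gives `∫ ω tr(DΦ Dσ) = -∫ Dω(Dσ Φ)`, where
`L = tr(DΦ Dσ)` is nonnegative and vanishes only where `Z = 0` or `D²u = 0`.

The cutoffs are chosen in the coordinates of the solution. By Noether's theorem the energy-momentum
tensor `T = (F(Z) - ∇F(Z) · Z + c) I + ∇F(Z) ⊗ Z` has curl-free rows, so `T = DΛ` for some
`Λ : ℝ² → ℝ²`. The decay of `g''` bounds `g(t) - t g'(t)` from below; for `c` large this makes `Λ`
strongly monotone, hence injective and proper, and gives the pointwise bound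
`|T Dσ Φ|² ≤ C L det T`. With `ω = η(Λ)²`, Cauchy–Schwarz and the change of variables `y = Λ(x)`
yield `∫ η(Λ)² L ≤ C ∫ |∇η|²`. In the plane the right-hand side can be made arbitrarily small with
`η = 1` on any given ball, so `L = 0`. Thus `|Z|²` has zero derivative everywhere, `|Z|` is
constant, and therefore so is `Z`.
-/

open Filter Module MeasureTheory Metric Set
open scoped Gradient RealInnerProductSpace Topology

section Divergence

variable {E F : Type*} [NormedAddCommGroup E] [NormedSpace ℝ E] [NormedAddCommGroup F]
  [NormedSpace ℝ F]

/-- The divergence of a vector field, defined without coordinates as the trace of its derivative. -/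
noncomputable def divergence (V : E → E) (x : E) : ℝ :=
  LinearMap.trace ℝ E (fderiv ℝ V x)

theorem divergence_comp_add_right (V : E → E) (a x : E) :
    divergence (fun y => V (y + a)) x = divergence V (x + a) := by
  simp only [divergence, fderiv_comp_add_right]

theorem trace_eq_sum_coord {ι : Type*} [Fintype ι] (b : Basis ι ℝ E) (A : E →L[ℝ] E) :
    LinearMap.trace ℝ E A = ∑ i, b.coord i (A (b i)) := by
  classical
  simp [LinearMap.trace_eq_matrix_trace ℝ b, Matrix.trace, LinearMap.toMatrix_apply]

theorem divergence_eq_sum_fderiv_single {ι : Type*} [Fintype ι] [DecidableEq ι]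
    {V : EuclideanSpace ℝ ι → EuclideanSpace ℝ ι} {x : EuclideanSpace ℝ ι}
    (hV : DifferentiableAt ℝ V x) :
    divergence V x = ∑ i, fderiv ℝ (fun y => V y i) x (EuclideanSpace.single i 1) := by
  have hcoord (i : ι) : HasFDerivAt (fun y => V y i)
      ((EuclideanSpace.proj i : EuclideanSpace ℝ ι →L[ℝ] ℝ) ∘L fderiv ℝ V x) x :=
    (EuclideanSpace.proj i : EuclideanSpace ℝ ι →L[ℝ] ℝ).hasFDerivAt.comp x hV.hasFDerivAt
  rw [divergence, trace_eq_sum_coord (EuclideanSpace.basisFun ι ℝ).toBasis]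
  exact Finset.sum_congr rfl fun i _ => by simp [(hcoord i).fderiv]

theorem sum_apply_basis_mul_coord {ι : Type*} [Fintype ι] (b : Basis ι ℝ E) (l : E →L[ℝ] ℝ)
    (v : E) : ∑ i, l (b i) * b.coord i v = l v := by
  conv_rhs => rw [← b.sum_repr v, map_sum]
  simp [mul_comm]

theorem continuous_trace [FiniteDimensional ℝ E] :
    Continuous fun A : E →L[ℝ] E => LinearMap.trace ℝ E A :=
  LinearMap.continuous_of_finiteDimensional (LinearMap.trace ℝ E ∘ₗ ContinuousLinearMap.coeLM ℝ)

theorem integrable_apply_of_hasCompactSupport {X : Type*} [TopologicalSpace X] [MeasurableSpace X]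
    [OpensMeasurableSpace X] {μ : Measure X} [IsFiniteMeasureOnCompacts μ] {α : X → F →L[ℝ] ℝ}
    (hα : Continuous α) (hc : HasCompactSupport α) {w : X → F} (hw : Continuous w) :
    Integrable (fun x => α x (w x)) μ :=
  (hα.clm_apply hw).integrable_of_hasCompactSupport (hc.mono fun x hx h => hx (by simp [h]))

theorem hasDerivAt_integral_apply_comp_add_smul [MeasurableSpace E] [BorelSpace E] {μ : Measure E}
    [IsFiniteMeasureOnCompacts μ] {α : E → F →L[ℝ] ℝ} (hα : Continuous α)
    (hc : HasCompactSupport α) {W : E → F} (hW : ContDiff ℝ 1 W) (v : E) :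
    HasDerivAt (fun s : ℝ => ∫ x, α x (W (x + s • v)) ∂μ) (∫ x, α x (fderiv ℝ W x v) ∂μ) 0 := by
  have hW' : Continuous fun x => fderiv ℝ W x v :=
    (hW.continuous_fderiv one_ne_zero).clm_apply continuous_const
  obtain ⟨C, hC⟩ : ∃ C, ∀ y ∈ (fun q : E × ℝ => q.1 + q.2 • v) '' (tsupport α ×ˢ Icc (-1) 1),
      ‖fderiv ℝ W y v‖ ≤ C :=
    ((hc.isCompact.prod isCompact_Icc).image (by fun_prop)).exists_bound_of_continuousOn
      hW'.continuousOn
  have hderiv x (s : ℝ) :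
      HasDerivAt (fun s : ℝ => α x (W (x + s • v))) (α x (fderiv ℝ W (x + s • v) v)) s := by
    have hline : HasDerivAt (fun s : ℝ => x + s • v) v s := by
      simpa using ((hasDerivAt_id s).smul_const v).const_add x
    exact (α x).hasFDerivAt.comp_hasDerivAt s
      ((hW.differentiable one_ne_zero _).hasFDerivAt.comp_hasDerivAt s hline)
  have hbound x (s : ℝ) (hs : s ∈ Icc (-1) 1) :
      ‖α x (fderiv ℝ W (x + s • v) v)‖ ≤ ‖α x‖ * C := by
    by_cases hx : x ∈ tsupport α
    · exact ((α x).le_opNorm _).trans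
        (mul_le_mul_of_nonneg_left (hC _ ⟨(x, s), ⟨hx, hs⟩, rfl⟩) (norm_nonneg _))
    · simp [image_eq_zero_of_notMem_tsupport hx]
  have hint {w : E → F} (hw : Continuous w) :=
    integrable_apply_of_hasCompactSupport (μ := μ) hα hc hw
  simpa using (hasDerivAt_integral_of_dominated_loc_of_deriv_le (μ := μ)
    (F := fun s x => α x (W (x + s • v))) (F' := fun s x => α x (fderiv ℝ W (x + s • v) v))
    (Icc_mem_nhds (by norm_num : (-1 : ℝ) < 0) one_pos)
    (.of_forall fun s => (hint (hW.continuous.comp (by fun_prop))).aestronglyMeasurable)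
    (hint (hW.continuous.comp (by fun_prop)))
    (hint (hW'.comp (by fun_prop))).aestronglyMeasurable
    (.of_forall hbound)
    ((hα.norm.integrable_of_hasCompactSupport hc.norm).mul_const C)
    (.of_forall fun x s _ => hderiv x s)).2

variable [FiniteDimensional ℝ E] [MeasurableSpace E] [BorelSpace E] {μ : Measure E}
  [μ.IsAddHaarMeasure] {φ : E → ℝ} {V : E → E}

theorem integral_mul_fderiv_apply {ψ : E → ℝ} (hφ : ContDiff ℝ 1 φ) (hc : HasCompactSupport φ)
    (hψ : ContDiff ℝ 1 ψ) (v : E) :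
    ∫ x, φ x * fderiv ℝ ψ x v ∂μ = -∫ x, fderiv ℝ φ x v * ψ x ∂μ :=
  have hφ' : Continuous fun x => fderiv ℝ φ x v :=
    (hφ.continuous_fderiv one_ne_zero).clm_apply continuous_const
  have hψ' : Continuous fun x => fderiv ℝ ψ x v :=
    (hψ.continuous_fderiv one_ne_zero).clm_apply continuous_const
  integral_mul_fderiv_eq_neg_fderiv_mul_of_integrable
    ((hφ'.mul hψ.continuous).integrable_of_hasCompactSupport (hc.fderiv_apply ℝ v).mul_right)
    ((hφ.continuous.mul hψ').integrable_of_hasCompactSupport hc.mul_right)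
    ((hφ.continuous.mul hψ.continuous).integrable_of_hasCompactSupport hc.mul_right)
    (fun x _ => hφ.differentiable one_ne_zero x) (fun x _ => hψ.differentiable one_ne_zero x)

theorem integral_mul_divergence (hφ : ContDiff ℝ 1 φ) (hc : HasCompactSupport φ)
    (hV : ContDiff ℝ 1 V) :
    ∫ x, φ x * divergence V x ∂μ = -∫ x, fderiv ℝ φ x (V x) ∂μ := by
  let b := finBasis ℝ E
  let ℓ i := (b.coord i).toContinuousLinearMap
  have hφ' : Continuous (fderiv ℝ φ) := hφ.continuous_fderiv one_ne_zero
  have hℓ i : ContDiff ℝ 1 (ℓ i ∘ V) := (ℓ i).contDiff.comp hV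
  have hfderiv i x : fderiv ℝ (ℓ i ∘ V) x (b i) = b.coord i (fderiv ℝ V x (b i)) := by
    rw [((ℓ i).hasFDerivAt.comp x (hV.differentiable one_ne_zero x).hasFDerivAt).fderiv]
    rfl
  have hint₁ i : Integrable (fun x => φ x * fderiv ℝ (ℓ i ∘ V) x (b i)) μ :=
    (hφ.continuous.mul (((hℓ i).continuous_fderiv one_ne_zero).clm_apply
      continuous_const)).integrable_of_hasCompactSupport hc.mul_right
  have hint₂ i : Integrable (fun x => fderiv ℝ φ x (b i) * (ℓ i ∘ V) x) μ :=
    ((hφ'.clm_apply continuous_const).mul (hℓ i).continuous).integrable_of_hasCompactSupport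
      (hc.fderiv_apply ℝ _).mul_right
  calc ∫ x, φ x * divergence V x ∂μ
      = ∑ i, ∫ x, φ x * fderiv ℝ (ℓ i ∘ V) x (b i) ∂μ := by
        rw [← integral_finsetSum _ fun i _ => hint₁ i]
        simp only [divergence, trace_eq_sum_coord b, Finset.mul_sum, hfderiv]
    _ = -∑ i, ∫ x, fderiv ℝ φ x (b i) * (ℓ i ∘ V) x ∂μ := by
        simp only [integral_mul_fderiv_apply hφ hc (hℓ _), Finset.sum_neg_distrib]
    _ = -∫ x, fderiv ℝ φ x (V x) ∂μ := by
        rw [← integral_finsetSum _ fun i _ => hint₂ i]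
        exact congrArg Neg.neg (integral_congr_ae (.of_forall fun x =>
          sum_apply_basis_mul_coord b _ _))

theorem integral_fderiv_apply_fderiv_eq_zero (hV : ContDiff ℝ 1 V) (hdiv : ∀ x, divergence V x = 0)
    (hφ : ContDiff ℝ 1 φ) (hc : HasCompactSupport φ) (v : E) :
    ∫ x, fderiv ℝ φ x (fderiv ℝ V x v) ∂μ = 0 := by
  have htranslate (s : ℝ) : ∫ x, fderiv ℝ φ x (V (x + s • v)) ∂μ = 0 := by
    have hVs : ContDiff ℝ 1 fun x => V (x + s • v) := hV.comp (by fun_prop)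
    simpa [divergence_comp_add_right, hdiv] using integral_mul_divergence (μ := μ) hφ hc hVs
  refine (hasDerivAt_integral_apply_comp_add_smul (hφ.continuous_fderiv one_ne_zero)
    (hc.fderiv ℝ) hV v).unique ?_
  simpa only [htranslate] using hasDerivAt_const (0 : ℝ) (0 : ℝ)

/-- Formally `div (DV Φ) = tr (DΦ DV)` when `div V = 0`; the weak form asks for no second
derivatives of `V`. -/
theorem integral_mul_trace_fderiv_comp_fderiv {ω : E → ℝ} {Φ : E → E} (hV : ContDiff ℝ 1 V)
    (hdiv : ∀ x, divergence V x = 0) (hΦ : ContDiff ℝ 1 Φ) (hω : ContDiff ℝ 1 ω)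
    (hc : HasCompactSupport ω) :
    ∫ x, ω x * LinearMap.trace ℝ E (fderiv ℝ Φ x ∘L fderiv ℝ V x) ∂μ
      = -∫ x, fderiv ℝ ω x (fderiv ℝ V x (Φ x)) ∂μ := by
  let b := finBasis ℝ E
  let ℓ i := (b.coord i).toContinuousLinearMap
  have hV' : Continuous (fderiv ℝ V) := hV.continuous_fderiv one_ne_zero
  have hφ i : ContDiff ℝ 1 (ω * ℓ i ∘ Φ) := hω.mul ((ℓ i).contDiff.comp hΦ)
  have hproduct i x : fderiv ℝ (ω * ℓ i ∘ Φ) x (fderiv ℝ V x (b i))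
      = ω x * b.coord i ((fderiv ℝ Φ x ∘L fderiv ℝ V x) (b i))
        + (fderiv ℝ ω x ∘L fderiv ℝ V x) (b i) * b.coord i (Φ x) := by
    rw [((hω.differentiable one_ne_zero x).hasFDerivAt.mul
      ((ℓ i).hasFDerivAt.comp x (hΦ.differentiable one_ne_zero x).hasFDerivAt)).fderiv]
    simp [ℓ, mul_comm]
  have hsum x : ∑ i, fderiv ℝ (ω * ℓ i ∘ Φ) x (fderiv ℝ V x (b i))
      = ω x * LinearMap.trace ℝ E (fderiv ℝ Φ x ∘L fderiv ℝ V x)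
        + fderiv ℝ ω x (fderiv ℝ V x (Φ x)) := by
    simp only [hproduct, Finset.sum_add_distrib, ← Finset.mul_sum, ← trace_eq_sum_coord b,
      sum_apply_basis_mul_coord b]
    rfl
  have hint₁ : Integrable (fun x => ω x * LinearMap.trace ℝ E (fderiv ℝ Φ x ∘L fderiv ℝ V x)) μ :=
    (hω.continuous.mul (continuous_trace.comp ((hΦ.continuous_fderiv one_ne_zero).clm_comp
      hV'))).integrable_of_hasCompactSupport hc.mul_right
  have hint₂ : Integrable (fun x => fderiv ℝ ω x (fderiv ℝ V x (Φ x))) μ :=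
    integrable_apply_of_hasCompactSupport (hω.continuous_fderiv one_ne_zero) (hc.fderiv ℝ)
      (hV'.clm_apply hΦ.continuous)
  rw [← add_eq_zero_iff_eq_neg, ← integral_add hint₁ hint₂, ← integral_congr_ae (.of_forall hsum),
    integral_finsetSum _ fun i _ => integrable_apply_of_hasCompactSupport
      ((hφ i).continuous_fderiv one_ne_zero) (hc.mul_right.fderiv ℝ)
      (hV'.clm_apply continuous_const)]
  exact Finset.sum_eq_zero fun i _ =>
    integral_fderiv_apply_fderiv_eq_zero hV hdiv (hφ i) hc.mul_right (b i)

end Divergence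

section Parabolicity

theorem norm_sum_sq_le_sum_norm_sq {ι F : Type*} [SeminormedAddCommGroup F] {s : Finset ι}
    {a : ι → F} (h : (s : Set ι).Pairwise fun i j => a i = 0 ∨ a j = 0) :
    ‖∑ i ∈ s, a i‖ ^ 2 ≤ ∑ i ∈ s, ‖a i‖ ^ 2 := by
  by_cases hzero : ∀ i ∈ s, a i = 0
  · simpa [Finset.sum_eq_zero hzero] using Finset.sum_nonneg fun i _ => sq_nonneg ‖a i‖
  push Not at hzero
  obtain ⟨i, hi, hai⟩ := hzero
  rw [Finset.sum_eq_single_of_mem i hi fun j hj hji => (h hi hj hji.symm).resolve_left hai]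
  exact Finset.single_le_sum (f := fun j => ‖a j‖ ^ 2) (fun j _ => sq_nonneg _) hi

variable {E : Type*} [NormedAddCommGroup E] [NormedSpace ℝ E]

theorem rIn_le_dist_and_dist_le_rOut_of_fderiv_ne_zero [HasContDiffBump E] {c x : E}
    (χ : ContDiffBump c) (h : fderiv ℝ χ x ≠ 0) : χ.rIn ≤ dist x c ∧ dist x c ≤ χ.rOut := by
  constructor
  · by_contra! hx
    exact h ((χ.eventuallyEq_one_of_mem_ball hx).fderiv_eq.trans (by simp))
  · rw [← mem_closedBall, ← χ.tsupport_eq]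
    exact support_fderiv_subset ℝ h

theorem mul_rIn_le_norm_and_norm_le_mul_rOut_of_fderiv_ne_zero [HasContDiffBump E]
    (χ : ContDiffBump (0 : E)) {r : ℝ} (hr : 0 < r) {x : E}
    (h : fderiv ℝ (fun y => χ (r⁻¹ • y)) x ≠ 0) : r * χ.rIn ≤ ‖x‖ ∧ ‖x‖ ≤ r * χ.rOut := by
  simp only [fderiv_comp_smul, ne_eq, smul_eq_zero, inv_eq_zero, hr.ne', false_or] at h
  have := rIn_le_dist_and_dist_le_rOut_of_fderiv_ne_zero χ h
  rwa [dist_zero_right, norm_smul, norm_inv, Real.norm_of_nonneg hr.le, le_inv_mul_iff₀ hr,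
    inv_mul_le_iff₀ hr] at this

variable [MeasurableSpace E] [BorelSpace E] {μ : Measure E}

section FiniteOnCompacts

variable [IsFiniteMeasureOnCompacts μ]

theorem integrable_norm_fderiv_sq {φ : E → ℝ} (hφ : ContDiff ℝ 1 φ) (hc : HasCompactSupport φ) :
    Integrable (fun x => ‖fderiv ℝ φ x‖ ^ 2) μ :=
  ((hφ.continuous_fderiv one_ne_zero).norm.pow 2).integrable_of_hasCompactSupport
    ((hc.fderiv ℝ).mono fun x hx h => hx (by simp [h]))

theorem integral_norm_fderiv_average_sq_le {χ : ℕ → E → ℝ} (hχ : ∀ j, ContDiff ℝ 1 (χ j))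
    (hc : ∀ j, HasCompactSupport (χ j))
    (hdisjoint : ∀ x, Pairwise fun i j => fderiv ℝ (χ i) x = 0 ∨ fderiv ℝ (χ j) x = 0) {K : ℝ}
    (hK : ∀ j, ∫ x, ‖fderiv ℝ (χ j) x‖ ^ 2 ∂μ ≤ K) (n : ℕ) :
    ∫ x, ‖fderiv ℝ (fun y => (n : ℝ)⁻¹ * ∑ j ∈ Finset.range n, χ j y) x‖ ^ 2 ∂μ ≤ K / n := by
  have hfderiv x : fderiv ℝ (fun y => (n : ℝ)⁻¹ * ∑ j ∈ Finset.range n, χ j y) x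
      = (n : ℝ)⁻¹ • ∑ j ∈ Finset.range n, fderiv ℝ (χ j) x :=
    ((HasFDerivAt.fun_sum fun j _ =>
      ((hχ j).differentiable one_ne_zero x).hasFDerivAt).const_mul _).fderiv
  have hint j := integrable_norm_fderiv_sq (μ := μ) (hχ j) (hc j)
  calc ∫ x, ‖fderiv ℝ (fun y => (n : ℝ)⁻¹ * ∑ j ∈ Finset.range n, χ j y) x‖ ^ 2 ∂μ
      ≤ ∫ x, (n : ℝ)⁻¹ ^ 2 * ∑ j ∈ Finset.range n, ‖fderiv ℝ (χ j) x‖ ^ 2 ∂μ := by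
        refine integral_mono_of_nonneg (.of_forall fun x => by positivity)
          ((integrable_finsetSum _ fun j _ => hint j).const_mul _) (.of_forall fun x => ?_)
        simp only [hfderiv, norm_smul, mul_pow, Real.norm_eq_abs, sq_abs]
        gcongr
        exact norm_sum_sq_le_sum_norm_sq ((hdisjoint x).set_pairwise _)
    _ = (n : ℝ)⁻¹ ^ 2 * ∑ j ∈ Finset.range n, ∫ x, ‖fderiv ℝ (χ j) x‖ ^ 2 ∂μ := by
        rw [integral_const_mul, integral_finsetSum _ fun j _ => hint j]
    _ ≤ (n : ℝ)⁻¹ ^ 2 * (n * K) := by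
        gcongr
        simpa using Finset.sum_le_card_nsmul (Finset.range n) _ K fun j _ => hK j
    _ = K / n := by
        rcases eq_or_ne (n : ℝ) 0 with hn | hn
        · simp [hn]
        · field_simp

end FiniteOnCompacts

variable [FiniteDimensional ℝ E] [μ.IsAddHaarMeasure]

theorem integral_norm_fderiv_comp_smul_sq {F : Type*} [NormedAddCommGroup F] [NormedSpace ℝ F]
    (hE : finrank ℝ E = 2) (f : E → F) {c : ℝ} (hc : c ≠ 0) :
    ∫ x, ‖fderiv ℝ (fun y => f (c • y)) x‖ ^ 2 ∂μ = ∫ x, ‖fderiv ℝ f x‖ ^ 2 ∂μ := by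
  simp only [fderiv_comp_smul, norm_smul, mul_pow]
  rw [integral_const_mul, Measure.integral_comp_smul μ (fun x => ‖fderiv ℝ f x‖ ^ 2), hE]
  simp [hc]

/-- The plane has zero 2-capacity at infinity: averaging `n` dilates of one cutoff whose gradients
live on disjoint annuli divides its scale-invariant energy by `n`. -/
theorem exists_cutoff_integral_norm_fderiv_sq_lt (hE : finrank ℝ E = 2) (R : ℝ) {ε : ℝ}
    (hε : 0 < ε) :
    ∃ η : E → ℝ, ContDiff ℝ 1 η ∧ HasCompactSupport η ∧ (∀ x, ‖x‖ ≤ R → η x = 1) ∧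
      ∫ x, ‖fderiv ℝ η x‖ ^ 2 ∂μ < ε := by
  let χ₀ : ContDiffBump (0 : E) := ⟨1, 2, one_pos, one_lt_two⟩
  let r (j : ℕ) : ℝ := max R 1 * 3 ^ j
  have hr j : 0 < r j := by positivity
  have hr_le j : R ≤ r j :=
    (le_max_left R 1).trans (le_mul_of_one_le_right (by positivity) (one_le_pow₀ (by norm_num)))
  let χ (j : ℕ) (x : E) : ℝ := χ₀ ((r j)⁻¹ • x)
  have hχ j : ContDiff ℝ 1 (χ j) := χ₀.contDiff.comp (by fun_prop)
  have hχc j : HasCompactSupport (χ j) := χ₀.hasCompactSupport.comp_smul (inv_ne_zero (hr j).ne')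
  have hannulus j x (h : fderiv ℝ (χ j) x ≠ 0) : r j * 1 ≤ ‖x‖ ∧ ‖x‖ ≤ r j * 2 :=
    mul_rIn_le_norm_and_norm_le_mul_rOut_of_fderiv_ne_zero χ₀ (hr j) h
  have hdisjoint x i j (hij : i < j) : fderiv ℝ (χ i) x = 0 ∨ fderiv ℝ (χ j) x = 0 := by
    by_contra! h
    have hpow : (3 : ℝ) ^ (i + 1) ≤ 3 ^ j := pow_le_pow_right₀ (by norm_num) hij
    have : max R 1 * 3 ^ (i + 1) ≤ r j := by simp only [r]; gcongr
    linarith [(hannulus i x h.1).2, (hannulus j x h.2).1, hr i,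
      show max R 1 * 3 ^ (i + 1) = 3 * r i by simp only [r]; ring]
  obtain ⟨n, hn⟩ := exists_nat_gt ((∫ x, ‖fderiv ℝ χ₀ x‖ ^ 2 ∂μ) / ε)
  have hn0 : (0 : ℝ) < n := (div_nonneg (integral_nonneg fun x => sq_nonneg _) hε.le).trans_lt hn
  refine ⟨fun x => (n : ℝ)⁻¹ * ∑ j ∈ Finset.range n, χ j x, by fun_prop, ?_, fun x hx => ?_,
    (integral_norm_fderiv_average_sq_le hχ hχc (fun x i j hij => ?_) (fun j =>
      (integral_norm_fderiv_comp_smul_sq hE χ₀ (inv_ne_zero (hr j).ne')).le) n).trans_lt ?_⟩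
  · have hsum : HasCompactSupport fun x => ∑ j ∈ Finset.range n, χ j x := by
      simpa only [Finset.sum_fn] using HasCompactSupport.finset_sum fun j _ => hχc j
    exact hsum.mul_left
  · have hone j : χ j x = 1 := χ₀.one_of_mem_closedBall (by
      rw [mem_closedBall_zero_iff, norm_smul, norm_inv, Real.norm_of_nonneg (hr j).le]
      exact inv_mul_le_one_of_le₀ (hx.trans (hr_le j)) (hr j).le)
    simp [hone, hn0.ne']
  · rcases hij.lt_or_gt with h | h
    exacts [hdisjoint x i j h, (hdisjoint x j i h).symm]
  · rwa [div_lt_iff₀ hn0, mul_comm, ← div_lt_iff₀ hε]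

end Parabolicity

section Liouville

variable {E : Type*} [NormedAddCommGroup E] [NormedSpace ℝ E] [FiniteDimensional ℝ E]
  [MeasurableSpace E] [BorelSpace E] {μ : Measure E} [μ.IsAddHaarMeasure] {Λ X : E → E}
  {L : E → ℝ} {C : ℝ}

theorem integral_abs_det_mul_comp_le (hΛ : Differentiable ℝ Λ) (hinj : Λ.Injective) {f : E → ℝ}
    (hf : ∀ y, 0 ≤ f y) (hint : Integrable f μ) :
    ∫ x, |(fderiv ℝ Λ x).det| * f (Λ x) ∂μ ≤ ∫ y, f y ∂μ := by
  have hchange := integral_image_eq_integral_abs_det_fderiv_smul μ MeasurableSet.univ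
    (fun x _ => (hΛ x).hasFDerivAt.hasFDerivWithinAt) hinj.injOn f
  simp only [smul_eq_mul, setIntegral_univ] at hchange
  exact hchange ▸ setIntegral_le_integral hint (.of_forall hf)

theorem neg_two_mul_mul_le_of_sq_le_mul {p q l m : ℝ} (hl : 0 ≤ l) (hm : 0 ≤ m)
    (h : q ^ 2 ≤ l * m) : -(2 * p * q) ≤ p ^ 2 * l / 2 + 2 * m := by
  have hsq : (2 * p * q) ^ 2 ≤ (p ^ 2 * l / 2 + 2 * m) ^ 2 := by
    nlinarith [sq_nonneg (p ^ 2 * l / 2 - 2 * m), mul_le_mul_of_nonneg_left h (sq_nonneg p)]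
  exact (neg_le_abs _).trans (abs_le_of_sq_le_sq hsq (by positivity))

theorem neg_fderiv_comp_sq_apply_le {E F : Type*} [NormedAddCommGroup E] [NormedSpace ℝ E]
    [NormedAddCommGroup F] [NormedSpace ℝ F] {Λ : E → F} {η : F → ℝ} {x v : E} {C l J : ℝ}
    (hη : DifferentiableAt ℝ η (Λ x)) (hΛ : DifferentiableAt ℝ Λ x) (hl : 0 ≤ l) (hJ : 0 ≤ J)
    (hC : 0 ≤ C) (hv : ‖fderiv ℝ Λ x v‖ ^ 2 ≤ C * (l * J)) :
    -fderiv ℝ (fun y => η (Λ y) ^ 2) x v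
      ≤ η (Λ x) ^ 2 * l / 2 + 2 * (C * (J * ‖fderiv ℝ η (Λ x)‖ ^ 2)) := by
  have hfderiv : fderiv ℝ (fun y => η (Λ y) ^ 2) x v
      = 2 * η (Λ x) * fderiv ℝ η (Λ x) (fderiv ℝ Λ x v) := by
    have h : HasFDerivAt (fun y => η (Λ y) ^ 2) _ x :=
      (hη.hasFDerivAt.comp x hΛ.hasFDerivAt).pow 2
    simp [h.fderiv]
  rw [hfderiv]
  refine neg_two_mul_mul_le_of_sq_le_mul hl (by positivity) ?_
  calc fderiv ℝ η (Λ x) (fderiv ℝ Λ x v) ^ 2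
      ≤ (‖fderiv ℝ η (Λ x)‖ * ‖fderiv ℝ Λ x v‖) ^ 2 :=
        sq_le_sq.2 (((fderiv ℝ η (Λ x)).le_opNorm _).trans (le_abs_self _))
    _ ≤ ‖fderiv ℝ η (Λ x)‖ ^ 2 * (C * (l * J)) := by
        rw [mul_pow]
        exact mul_le_mul_of_nonneg_left hv (sq_nonneg _)
    _ = l * (C * (J * ‖fderiv ℝ η (Λ x)‖ ^ 2)) := by ring

theorem hasCompactSupport_comp_of_tendsto_cocompact {X Y Z : Type*} [TopologicalSpace X]
    [R1Space X] [TopologicalSpace Y] [R1Space Y] [Zero Z] {f : Y → Z} (hf : HasCompactSupport f)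
    {g : X → Y} (hg : Tendsto g (cocompact X) (cocompact Y)) :
    HasCompactSupport fun x => f (g x) := by
  rw [hasCompactSupport_iff_eventuallyEq, coclosedCompact_eq_cocompact] at hf ⊢
  exact hg.eventually hf

/-- Absorbing half of the left-hand side after the weighted AM-GM inequality, the Jacobian
becomes a volume element and the integral moves to the `Λ`-plane. -/
theorem integral_sq_comp_mul_le (hΛ : ContDiff ℝ 1 Λ) (hinj : Λ.Injective)
    (hproper : Tendsto Λ (cocompact E) (cocompact E)) (hX : Continuous X) (hL : Continuous L)
    (hL0 : ∀ x, 0 ≤ L x)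
    (hweak : ∀ ω : E → ℝ, ContDiff ℝ 1 ω → HasCompactSupport ω →
      ∫ x, ω x * L x ∂μ = -∫ x, fderiv ℝ ω x (X x) ∂μ)
    (hC : 0 ≤ C) (hbound : ∀ x, ‖fderiv ℝ Λ x (X x)‖ ^ 2 ≤ C * (L x * |(fderiv ℝ Λ x).det|))
    {η : E → ℝ} (hη : ContDiff ℝ 1 η) (hc : HasCompactSupport η) :
    ∫ x, η (Λ x) ^ 2 * L x ∂μ ≤ 4 * C * ∫ y, ‖fderiv ℝ η y‖ ^ 2 ∂μ := by
  have hηΛ : ContDiff ℝ 1 fun x => η (Λ x) := hη.comp hΛ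
  have hηΛc : HasCompactSupport fun x => η (Λ x) :=
    hasCompactSupport_comp_of_tendsto_cocompact hc hproper
  let J x := |(fderiv ℝ Λ x).det|
  have hJ : Continuous J :=
    (ContinuousLinearMap.continuous_det.comp (hΛ.continuous_fderiv one_ne_zero)).abs
  have hω : ContDiff ℝ 1 fun x => η (Λ x) ^ 2 := hηΛ.pow 2
  have hωc : HasCompactSupport fun x => η (Λ x) ^ 2 := hηΛc.mono fun x hx h => hx (by simp [h])
  have hDηΛc : HasCompactSupport fun x => fderiv ℝ η (Λ x) :=
    hasCompactSupport_comp_of_tendsto_cocompact (hc.fderiv ℝ) hproper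
  have hint₁ : Integrable (fun x => η (Λ x) ^ 2 * L x) μ :=
    (hω.continuous.mul hL).integrable_of_hasCompactSupport hωc.mul_right
  have hint₂ : Integrable (fun x => J x * ‖fderiv ℝ η (Λ x)‖ ^ 2) μ :=
    (hJ.mul (((hη.continuous_fderiv one_ne_zero).comp
      hΛ.continuous).norm.pow 2)).integrable_of_hasCompactSupport
        (hDηΛc.mono fun x hx h => hx (by simp [h]))
  have henergy := calc
    ∫ x, η (Λ x) ^ 2 * L x ∂μ
    _ = ∫ x, -fderiv ℝ (fun y => η (Λ y) ^ 2) x (X x) ∂μ := by rw [hweak _ hω hωc, integral_neg]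
    _ ≤ ∫ x, (η (Λ x) ^ 2 * L x / 2 + 2 * (C * (J x * ‖fderiv ℝ η (Λ x)‖ ^ 2))) ∂μ :=
        integral_mono (integrable_apply_of_hasCompactSupport
          (hω.continuous_fderiv one_ne_zero) (hωc.fderiv ℝ) hX).neg
          ((hint₁.div_const 2).add ((hint₂.const_mul C).const_mul 2)) fun x =>
            neg_fderiv_comp_sq_apply_le (hη.differentiable one_ne_zero _)
              (hΛ.differentiable one_ne_zero x) (hL0 x) (abs_nonneg _) hC (hbound x)
    _ = (∫ x, η (Λ x) ^ 2 * L x ∂μ) / 2 + 2 * (C * ∫ x, J x * ‖fderiv ℝ η (Λ x)‖ ^ 2 ∂μ) := by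
        rw [integral_add (hint₁.div_const 2) ((hint₂.const_mul C).const_mul 2), integral_div,
          integral_const_mul, integral_const_mul]
  have hchange := integral_abs_det_mul_comp_le (μ := μ) (hΛ.differentiable one_ne_zero) hinj
    (fun y => sq_nonneg ‖fderiv ℝ η y‖) (integrable_norm_fderiv_sq hη hc)
  linarith [mul_le_mul_of_nonneg_left hchange hC]

theorem eq_zero_of_weak_divergence_of_sq_norm_le (hE : finrank ℝ E = 2) (hΛ : ContDiff ℝ 1 Λ)
    (hinj : Λ.Injective) (hproper : Tendsto Λ (cocompact E) (cocompact E)) (hX : Continuous X)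
    (hL : Continuous L) (hL0 : ∀ x, 0 ≤ L x)
    (hweak : ∀ ω : E → ℝ, ContDiff ℝ 1 ω → HasCompactSupport ω →
      ∫ x, ω x * L x ∂μ = -∫ x, fderiv ℝ ω x (X x) ∂μ)
    (hC : 0 ≤ C) (hbound : ∀ x, ‖fderiv ℝ Λ x (X x)‖ ^ 2 ≤ C * (L x * |(fderiv ℝ Λ x).det|))
    (x₀ : E) : L x₀ = 0 := by
  by_contra hx₀
  let χ : ContDiffBump x₀ := ⟨1, 2, one_pos, one_lt_two⟩
  have hpos : 0 < ∫ x, χ x * L x ∂μ :=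
    (χ.continuous.mul hL).integral_pos_of_hasCompactSupport_nonneg_nonzero
      χ.hasCompactSupport.mul_right (fun x => mul_nonneg χ.nonneg (hL0 x))
      (mul_ne_zero (by simp [χ.eventuallyEq_one.eq_of_nhds]) hx₀)
  obtain ⟨R, hR⟩ :=
    (χ.hasCompactSupport.isCompact.image hΛ.continuous).isBounded.subset_closedBall 0
  obtain ⟨η, hη, hηc, hη1, henergy⟩ := exists_cutoff_integral_norm_fderiv_sq_lt (μ := μ) hE R
    (div_pos hpos (by positivity : 0 < 4 * C + 1))
  have hle x : χ x * L x ≤ η (Λ x) ^ 2 * L x := by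
    refine mul_le_mul_of_nonneg_right ?_ (hL0 x)
    by_cases hx : x ∈ tsupport χ
    · have hΛx : ‖Λ x‖ ≤ R := mem_closedBall_zero_iff.1 (hR ⟨x, hx, rfl⟩)
      simpa [hη1 _ hΛx] using χ.le_one
    · simpa [image_eq_zero_of_notMem_tsupport hx] using sq_nonneg (η (Λ x))
  have hηΛc : HasCompactSupport fun x => η (Λ x) := 
    hasCompactSupport_comp_of_tendsto_cocompact hηc hproper
  have hcacc := integral_sq_comp_mul_le hΛ hinj hproper hX hL hL0 hweak hC hbound hη hηc
  have hmono : ∫ x, χ x * L x ∂μ ≤ ∫ x, η (Λ x) ^ 2 * L x ∂μ :=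
    integral_mono ((χ.continuous.mul hL).integrable_of_hasCompactSupport
      χ.hasCompactSupport.mul_right) (((hη.continuous.comp hΛ.continuous).pow 2 |>.mul
        hL).integrable_of_hasCompactSupport (hηΛc.mono fun x hx h => hx (by simp [h]))) hle
  rw [lt_div_iff₀ (by positivity)] at henergy
  linarith [integral_nonneg (μ := μ) (f := fun y => ‖fderiv ℝ η y‖ ^ 2) fun y => sq_nonneg _]

end Liouville

section RadialField

variable {E : Type*} [NormedAddCommGroup E] [InnerProductSpace ℝ E] {p : ℝ → ℝ}

/-- The radial field `z ↦ (p ‖z‖ - p 0) z / ‖z‖`, with `dslope` supplying the value `p' 0` of the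
quotient at the origin. -/
noncomputable def radialField (p : ℝ → ℝ) (z : E) : E :=
  dslope p 0 ‖z‖ • z

/-- The derivative of `radialField p`: it has eigenvalue `p' ‖z‖` along `z` and
`(p ‖z‖ - p 0) / ‖z‖` on the orthogonal complement of `z`. -/
noncomputable def radialFieldDeriv (p : ℝ → ℝ) (z : E) : E →L[ℝ] E :=
  dslope p 0 ‖z‖ • ContinuousLinearMap.id ℝ E
    + ((deriv p ‖z‖ - dslope p 0 ‖z‖) / ‖z‖ ^ 2) • InnerProductSpace.rankOne ℝ z z

theorem radialFieldDeriv_apply (p : ℝ → ℝ) (z v : E) :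
    radialFieldDeriv p z v = dslope p 0 ‖z‖ • v
      + (((deriv p ‖z‖ - dslope p 0 ‖z‖) / ‖z‖ ^ 2) * ⟪z, v⟫) • z := by
  simp [radialFieldDeriv, InnerProductSpace.rankOne_apply, smul_smul]

theorem inner_eq_norm_of_norm_smul_eq {z e : E} (he : ‖e‖ = 1) (hz : ‖z‖ • e = z) :
    ⟪z, e⟫ = ‖z‖ := by
  conv_lhs => rw [← hz]
  simp [inner_smul_left, he]

theorem radialFieldDeriv_apply_direction {z e : E} (he : ‖e‖ = 1) (hz : ‖z‖ • e = z) :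
    radialFieldDeriv p z e = deriv p ‖z‖ • e := by
  rcases eq_or_ne z 0 with rfl | hz0
  · simp [radialFieldDeriv_apply]
  have hnorm : ‖z‖ ≠ 0 := norm_ne_zero_iff.2 hz0
  have hsmul (s : ℝ) : s • z = (s * ‖z‖) • e := by rw [mul_smul, hz]
  rw [radialFieldDeriv_apply, inner_eq_norm_of_norm_smul_eq he hz, hsmul, ← add_smul]
  congr 1
  field_simp
  ring

theorem radialFieldDeriv_apply_of_inner_eq_zero {z v : E} (h : ⟪z, v⟫ = 0) :
    radialFieldDeriv p z v = dslope p 0 ‖z‖ • v := by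
  simp [radialFieldDeriv_apply, h]

theorem mul_dslope_zero (hp0 : p 0 = 0) (t : ℝ) : t * dslope p 0 t = p t := by
  simpa [hp0] using sub_smul_dslope p 0 t

theorem continuous_dslope_of_contDiff (hp : ContDiff ℝ 1 p) (a : ℝ) : Continuous (dslope p a) := by
  rw [← continuousOn_univ, continuousOn_dslope univ_mem]
  exact ⟨hp.continuous.continuousOn, hp.differentiable one_ne_zero a⟩

theorem hasDerivAt_dslope {a t : ℝ} (hp : DifferentiableAt ℝ p t) (ht : t ≠ a) :
    HasDerivAt (dslope p a) ((deriv p t - dslope p a t) / (t - a)) t := by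
  have ht' : t - a ≠ 0 := sub_ne_zero.2 ht
  have h := (hp.hasDerivAt.sub_const (p a)).div ((hasDerivAt_id t).sub_const a) ht'
  refine (h.congr_of_eventuallyEq ?_).congr_deriv ?_
  · filter_upwards [isOpen_ne.mem_nhds ht] with s hs
    simp [dslope_of_ne _ hs, slope_def_field]
  · rw [dslope_of_ne _ ht, slope_def_field]
    simp only [id]
    field_simp

theorem hasFDerivAt_norm {z : E} (hz : z ≠ 0) :
    HasFDerivAt (fun z : E => ‖z‖) (‖z‖⁻¹ • innerSL ℝ z) z := by
  have h := (hasStrictFDerivAt_norm_sq z).hasFDerivAt.sqrt (by simpa using hz)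
  simp only [Real.sqrt_sq (norm_nonneg _)] at h
  refine h.congr_fderiv ?_
  ext v
  simp
  field_simp

theorem hasFDerivAt_radialField (hp : ContDiff ℝ 1 p) (z : E) :
    HasFDerivAt (radialField p) (radialFieldDeriv p z) z := by
  have hcont : Continuous fun z : E => dslope p 0 ‖z‖ :=
    (continuous_dslope_of_contDiff hp 0).comp continuous_norm
  rcases eq_or_ne z 0 with rfl | hz
  · have hlim : Tendsto (fun v : E => dslope p 0 ‖v‖ - dslope p 0 ‖(0 : E)‖) (𝓝 0) (𝓝 0) :=
      (hcont.sub continuous_const).tendsto' 0 0 (sub_self _)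
    have h := ((Asymptotics.isLittleO_one_iff ℝ).2 hlim).smul_isBigO
      (Asymptotics.isBigO_refl (fun v : E => v) (𝓝 0))
    simpa [hasFDerivAt_iff_isLittleO_nhds_zero, radialField, radialFieldDeriv, sub_smul] using h
  · have hz' : ‖z‖ ≠ 0 := norm_ne_zero_iff.2 hz
    have h := ((hasDerivAt_dslope (hp.differentiable one_ne_zero _) hz').comp_hasFDerivAt z
      (hasFDerivAt_norm hz)).smul (hasFDerivAt_id z)
    refine h.congr_fderiv ?_
    ext v : 1
    rw [radialFieldDeriv_apply]
    simp [smul_smul]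
    congr 2
    field_simp

theorem continuous_radialFieldDeriv (hp : ContDiff ℝ 1 p) :
    Continuous (radialFieldDeriv p : E → E →L[ℝ] E) := by
  have hdslope : Continuous fun z : E => dslope p 0 ‖z‖ :=
    (continuous_dslope_of_contDiff hp 0).comp continuous_norm
  have hdiff : Continuous fun z : E => deriv p ‖z‖ - dslope p 0 ‖z‖ :=
    ((hp.continuous_deriv le_rfl).comp continuous_norm).sub hdslope
  have hrankOne : Continuous fun z : E => InnerProductSpace.rankOne ℝ z z :=
    (InnerProductSpace.rankOne ℝ).continuous.clm_apply continuous_id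
  refine (hdslope.smul continuous_const).add (continuous_iff_continuousAt.2 fun z => ?_)
  rcases eq_or_ne z 0 with rfl | hz
  · have hlim : Tendsto (fun z : E => ‖deriv p ‖z‖ - dslope p 0 ‖z‖‖) (𝓝 0) (𝓝 0) :=
      hdiff.norm.tendsto' 0 0 (by simp)
    rw [ContinuousAt, map_zero, smul_zero]
    refine squeeze_zero_norm (fun z => ?_) hlim
    rw [norm_smul, InnerProductSpace.norm_rankOne, norm_div, norm_pow, norm_norm, ← sq,
      div_mul_eq_mul_div, mul_div_assoc]
    exact mul_le_of_le_one_right (norm_nonneg _) (div_self_le_one _)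
  · exact (hdiff.continuousAt.div (by fun_prop) (by simpa using hz)).smul hrankOne.continuousAt

theorem contDiff_radialField (hp : ContDiff ℝ 1 p) :
    ContDiff ℝ 1 (radialField p : E → E) := by
  rw [contDiff_one_iff_hasFDerivAt]
  exact ⟨radialFieldDeriv p, continuous_radialFieldDeriv hp, hasFDerivAt_radialField hp⟩

theorem fderiv_radialField_comp {X : Type*} [NormedAddCommGroup X] [NormedSpace ℝ X] {Z : X → E}
    {x : X} (hp : ContDiff ℝ 1 p) (hZ : DifferentiableAt ℝ Z x) :
    fderiv ℝ (fun y => radialField p (Z y)) x = radialFieldDeriv p (Z x) ∘L fderiv ℝ Z x :=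
  ((hasFDerivAt_radialField hp (Z x)).comp x hZ.hasFDerivAt).fderiv

theorem hasGradientAt_comp_norm [CompleteSpace E] {g : ℝ → ℝ} (hg : Differentiable ℝ g)
    (hg0 : deriv g 0 = 0) (z : E) :
    HasGradientAt (fun z => g ‖z‖) (radialField (deriv g) z) z := by
  rw [hasGradientAt_iff_hasFDerivAt]
  rcases eq_or_ne z 0 with rfl | hz
  · have h := (hg 0).hasDerivAt
    rw [hg0, hasDerivAt_iff_isLittleO_nhds_zero] at h
    have hnorm : Tendsto (fun z : E => ‖z‖) (𝓝 0) (𝓝 0) := continuous_norm.tendsto' 0 0 norm_zero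
    simpa [hasFDerivAt_iff_isLittleO_nhds_zero, radialField, Function.comp_def] using
      (h.comp_tendsto hnorm).of_norm_right
  · refine ((hg ‖z‖).hasDerivAt.comp_hasFDerivAt z (hasFDerivAt_norm hz)).congr_fderiv ?_
    ext v
    simp [radialField, dslope_of_ne _ (norm_ne_zero_iff.2 hz), slope_def_field, hg0,
      div_eq_mul_inv, mul_assoc]

end RadialField

section StrongMonotonicity

variable {E : Type*} [NormedAddCommGroup E] [InnerProductSpace ℝ E] {Λ : E → E}

theorem norm_sub_sq_le_inner_sub_of_norm_sq_le_inner_fderiv (hΛ : Differentiable ℝ Λ)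
    (hmono : ∀ x v, ‖v‖ ^ 2 ≤ ⟪fderiv ℝ Λ x v, v⟫) (x y : E) :
    ‖x - y‖ ^ 2 ≤ ⟪Λ x - Λ y, x - y⟫ := by
  have hline (s : ℝ) : HasDerivAt (fun s : ℝ => y + s • (x - y)) (x - y) s := by
    simpa using ((hasDerivAt_id s).smul_const (x - y)).const_add y
  have hderiv (s : ℝ) : HasDerivAt (fun s : ℝ => ⟪Λ (y + s • (x - y)), x - y⟫)
      ⟪fderiv ℝ Λ (y + s • (x - y)) (x - y), x - y⟫ s := by
    simpa using ((hΛ _).hasFDerivAt.comp_hasDerivAt s (hline s)).inner ℝ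
      (hasDerivAt_const s (x - y))
  have h := mul_sub_le_image_sub_of_le_deriv (fun s => (hderiv s).differentiableAt)
    (fun s => (hderiv s).deriv ▸ hmono _ (x - y)) zero_le_one
  simpa [inner_sub_left] using h

theorem antilipschitzWith_one_of_norm_sq_le_inner_fderiv (hΛ : Differentiable ℝ Λ)
    (hmono : ∀ x v, ‖v‖ ^ 2 ≤ ⟪fderiv ℝ Λ x v, v⟫) : AntilipschitzWith 1 Λ := by
  refine AntilipschitzWith.of_le_mul_dist fun x y => ?_
  rw [NNReal.coe_one, one_mul, dist_eq_norm, dist_eq_norm]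
  rcases (norm_nonneg (x - y)).eq_or_lt with h0 | hpos
  · exact h0 ▸ norm_nonneg _
  refine le_of_mul_le_mul_right ?_ hpos
  calc ‖x - y‖ * ‖x - y‖ = ‖x - y‖ ^ 2 := (sq _).symm
    _ ≤ ⟪Λ x - Λ y, x - y⟫ := norm_sub_sq_le_inner_sub_of_norm_sq_le_inner_fderiv hΛ hmono x y
    _ ≤ ‖Λ x - Λ y‖ * ‖x - y‖ := real_inner_le_norm _ _

end StrongMonotonicity

section AdaptedFrame

variable {E : Type*} [NormedAddCommGroup E] [InnerProductSpace ℝ E]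

theorem exists_orthonormalBasis_norm_smul_eq [FiniteDimensional ℝ E] (hE : finrank ℝ E = 2)
    (z : E) : ∃ b : OrthonormalBasis (Fin 2) ℝ E, ‖z‖ • b 0 = z := by
  rcases eq_or_ne z 0 with rfl | hz
  · exact ⟨(stdOrthonormalBasis ℝ E).reindex (finCongr hE), by simp⟩
  have hunit : Orthonormal ℝ (({0} : Set (Fin 2)).domRestrict fun _ => ‖z‖⁻¹ • z) :=
    ⟨fun _ => norm_smul_inv_norm hz, fun i j hij => (hij (Subsingleton.elim i j)).elim⟩
  obtain ⟨b, hb⟩ := hunit.exists_orthonormalBasis_extension_of_card_eq (by simp [hE])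
  exact ⟨b, by rw [hb 0 rfl, smul_inv_smul₀ (norm_ne_zero_iff.2 hz)]⟩

variable (b : OrthonormalBasis (Fin 2) ℝ E)

theorem inner_eq_zero_of_norm_smul_eq {z : E} (hz : ‖z‖ • b 0 = z) : ⟪z, b 1⟫ = 0 := by
  rw [← hz]
  simp [inner_smul_left]

theorem eq_inner_smul_add_inner_smul (v : E) : v = ⟪b 0, v⟫ • b 0 + ⟪b 1, v⟫ • b 1 := by
  simpa [Fin.sum_univ_two] using (b.sum_repr' v).symm

theorem norm_smul_add_smul_sq_of_orthonormalBasis (x y : ℝ) :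
    ‖x • b 0 + y • b 1‖ ^ 2 = x ^ 2 + y ^ 2 := by
  rw [← b.sum_sq_norm_inner_right]
  simp [Fin.sum_univ_two, inner_add_right, inner_smul_right]

theorem det_eq_mul_of_apply_eq_smul {J : E →L[ℝ] E} {m n : ℝ} (h0 : J (b 0) = m • b 0)
    (h1 : J (b 1) = n • b 1) : J.det = m * n := by
  rw [ContinuousLinearMap.det, ← LinearMap.det_toMatrix b.toBasis, Matrix.det_fin_two]
  simp [LinearMap.toMatrix_apply, h0, h1]

theorem trace_comp_comp_of_apply_eq_smul {A B H : E →L[ℝ] E} {m n m' n' : ℝ}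
    (hA0 : A (b 0) = m • b 0) (hA1 : A (b 1) = n • b 1)
    (hB0 : B (b 0) = m' • b 0) (hB1 : B (b 1) = n' • b 1)
    (hH : (H : E →ₗ[ℝ] E).IsSymmetric) :
    LinearMap.trace ℝ E ((B ∘L H) ∘L (A ∘L H)) =
      m' * m * ⟪b 0, H (b 0)⟫ ^ 2 + (m' * n + n' * m) * ⟪b 1, H (b 0)⟫ ^ 2
        + n' * n * ⟪b 1, H (b 1)⟫ ^ 2 := by
  have hsymm : ⟪b 0, H (b 1)⟫ = ⟪b 1, H (b 0)⟫ := by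
    rw [real_inner_comm]; exact hH (b 1) (b 0)
  have hH0 := eq_inner_smul_add_inner_smul b (H (b 0))
  have hH1 := eq_inner_smul_add_inner_smul b (H (b 1))
  rw [hsymm] at hH1
  rw [LinearMap.trace_eq_sum_inner _ b, Fin.sum_univ_two]
  generalize ⟪b 0, H (b 0)⟫ = α at *
  generalize ⟪b 1, H (b 0)⟫ = β at *
  generalize ⟪b 1, H (b 1)⟫ = γ at *
  simp [hH0, hH1, hA0, hA1, hB0, hB1, inner_add_right, inner_smul_right]
  ring

theorem eq_zero_of_isSymmetric_of_inner_eq_zero {H : E →L[ℝ] E}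
    (hH : (H : E →ₗ[ℝ] E).IsSymmetric) (h00 : ⟪b 0, H (b 0)⟫ = 0) (h10 : ⟪b 1, H (b 0)⟫ = 0)
    (h11 : ⟪b 1, H (b 1)⟫ = 0) : H = 0 := by
  have h01 : ⟪b 0, H (b 1)⟫ = 0 := by rw [real_inner_comm]; exact (hH (b 1) (b 0)).trans h10
  have hb0 : H (b 0) = 0 := by rw [eq_inner_smul_add_inner_smul b (H (b 0)), h00, h10]; simp
  have hb1 : H (b 1) = 0 := by rw [eq_inner_smul_add_inner_smul b (H (b 1)), h01, h11]; simp
  ext v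
  rw [eq_inner_smul_add_inner_smul b v]
  simp [hb0, hb1]

theorem trace_smul_inner_smul_sub_inner_smul [FiniteDimensional ℝ E] (hE : finrank ℝ E = 2)
    (B : E →L[ℝ] E) (z v w : E) :
    LinearMap.trace ℝ E B • (⟪z, w⟫ • v - ⟪z, v⟫ • w) =
      ⟪z, w⟫ • B v - ⟪z, v⟫ • B w + ⟪z, B w⟫ • v - ⟪z, B v⟫ • w := by
  obtain ⟨b, -⟩ := exists_orthonormalBasis_norm_smul_eq hE z
  have inner_expand (x y : E) : ⟪x, y⟫ = ⟪b 0, x⟫ * ⟪b 0, y⟫ + ⟪b 1, x⟫ * ⟪b 1, y⟫ := by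
    simpa [Fin.sum_univ_two, real_inner_comm] using (b.sum_inner_mul_inner x y).symm
  have coord_apply (i : Fin 2) (y : E) :
      ⟪b i, B y⟫ = ⟪b 0, y⟫ * ⟪b i, B (b 0)⟫ + ⟪b 1, y⟫ * ⟪b i, B (b 1)⟫ := by
    conv_lhs => rw [eq_inner_smul_add_inner_smul b y]
    simp [inner_add_right, inner_smul_right]
  refine b.repr.injective (PiLp.ext fun i => ?_)
  rw [LinearMap.trace_eq_sum_inner _ b]
  fin_cases i <;>
  · simp [b.repr_apply_apply, Fin.sum_univ_two, inner_expand z, coord_apply _ v, coord_apply _ w]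
    ring

end AdaptedFrame

section Profile

theorem le_of_hasDerivAt_le {f f' B B' : ℝ → ℝ} (hf : ∀ t, 0 ≤ t → HasDerivAt f (f' t) t)
    (hB : ∀ t, 0 ≤ t → HasDerivAt B (B' t) t) (h0 : f 0 ≤ B 0) (hle : ∀ t, 0 ≤ t → f' t ≤ B' t)
    {t : ℝ} (ht : 0 ≤ t) : f t ≤ B t :=
  image_le_of_deriv_right_le_deriv_boundary
    (fun s hs => (hf s hs.1).continuousAt.continuousWithinAt)
    (fun s hs => (hf s hs.1).hasDerivWithinAt) h0
    (fun s hs => (hB s hs.1).continuousAt.continuousWithinAt)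
    (fun s hs => (hB s hs.1).hasDerivWithinAt) (fun s hs => hle s hs.1) (right_mem_Icc.2 ht)

theorem hasDerivAt_neg_div_one_add (a : ℝ) {t : ℝ} (ht : 0 ≤ t) :
    HasDerivAt (fun s => -(a / (1 + s))) (a / (1 + t) ^ 2) t := by
  have ht' : 1 + t ≠ 0 := by positivity
  simpa [neg_div] using ((hasDerivAt_const t a).fun_div ((hasDerivAt_id t).const_add 1) ht').fun_neg

/-- A convex radial profile `g` whose second derivative decays at the critical cubic rate with
constant `a`, so that `g` has at most linear growth. -/
structure IsCubicDecayProfile (g : ℝ → ℝ) (a : ℝ) : Prop where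
  contDiff : ContDiff ℝ 2 g
  deriv_zero : deriv g 0 = 0
  deriv2_pos : ∀ t, 0 < t → 0 < deriv (deriv g) t
  deriv2_le : ∀ t, 0 ≤ t → deriv (deriv g) t ≤ a / (1 + t) ^ 3

namespace IsCubicDecayProfile

variable {g : ℝ → ℝ} {a t : ℝ}

theorem contDiff_deriv (h : IsCubicDecayProfile g a) : ContDiff ℝ 1 (deriv g) :=
  ((contDiff_succ_iff_deriv (n := 1)).1 h.contDiff).2.2

theorem differentiable (h : IsCubicDecayProfile g a) : Differentiable ℝ g :=
  h.contDiff.differentiable two_ne_zero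

theorem hasDerivAt (h : IsCubicDecayProfile g a) (t : ℝ) : HasDerivAt g (deriv g t) t :=
  (h.differentiable t).hasDerivAt

theorem hasDerivAt_deriv (h : IsCubicDecayProfile g a) (t : ℝ) :
    HasDerivAt (deriv g) (deriv (deriv g) t) t :=
  (h.contDiff_deriv.differentiable one_ne_zero t).hasDerivAt

theorem deriv2_nonneg (h : IsCubicDecayProfile g a) (ht : 0 ≤ t) : 0 ≤ deriv (deriv g) t := by
  have hclosed : IsClosed {s | 0 ≤ deriv (deriv g) s} :=
    isClosed_le continuous_const (h.contDiff_deriv.continuous_deriv le_rfl)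
  have hsub : Ioi (0 : ℝ) ⊆ {s | 0 ≤ deriv (deriv g) s} := fun s hs => (h.deriv2_pos s hs).le
  exact hclosed.closure_subset_iff.2 hsub (by rwa [closure_Ioi, mem_Ici])

theorem nonneg (h : IsCubicDecayProfile g a) : 0 ≤ a := by
  simpa using (h.deriv2_nonneg le_rfl).trans (h.deriv2_le 0 le_rfl)

theorem deriv_eq_mul_dslope (h : IsCubicDecayProfile g a) (t : ℝ) :
    deriv g t = t * dslope (deriv g) 0 t :=
  (mul_dslope_zero h.deriv_zero t).symm

theorem dslope_pos (h : IsCubicDecayProfile g a) (ht : 0 < t) : 0 < dslope (deriv g) 0 t := by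
  have hmono : StrictMonoOn (deriv g) (Ici 0) :=
    strictMonoOn_of_deriv_pos (convex_Ici 0) h.contDiff_deriv.continuous.continuousOn
      fun s hs => h.deriv2_pos s (by simpa using hs)
  have hpos : 0 < deriv g t := h.deriv_zero ▸ hmono self_mem_Ici ht.le ht
  rw [h.deriv_eq_mul_dslope] at hpos
  exact pos_of_mul_pos_right hpos ht.le

theorem dslope_nonneg (h : IsCubicDecayProfile g a) (ht : 0 ≤ t) :
    0 ≤ dslope (deriv g) 0 t := by
  rcases ht.eq_or_lt with rfl | hpos
  · simpa using h.deriv2_nonneg le_rfl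
  · exact (h.dslope_pos hpos).le

theorem deriv_le (h : IsCubicDecayProfile g a) (ht : 0 ≤ t) : deriv g t ≤ a - a / (1 + t) := by
  refine le_of_hasDerivAt_le (fun s _ => h.hasDerivAt_deriv s)
    (fun s hs => (hasDerivAt_neg_div_one_add a hs).const_add a) (by simp [h.deriv_zero])
    (fun s hs => (h.deriv2_le s hs).trans ?_) ht
  exact div_le_div_of_nonneg_left h.nonneg (by positivity)
    (pow_le_pow_right₀ (by linarith) (by norm_num))

theorem dslope_le (h : IsCubicDecayProfile g a) (ht : 0 ≤ t) : dslope (deriv g) 0 t ≤ a := by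
  rcases ht.eq_or_lt with rfl | hpos
  · simpa using h.deriv2_le 0 le_rfl
  · refine le_of_mul_le_mul_left ?_ hpos
    calc t * dslope (deriv g) 0 t = deriv g t := (h.deriv_eq_mul_dslope t).symm
      _ ≤ a - a / (1 + t) := h.deriv_le ht
      _ = t * a / (1 + t) := by field_simp; ring
      _ ≤ t * a := div_le_self (mul_nonneg ht h.nonneg) (by linarith)

theorem hasDerivAt_sub_mul_deriv (h : IsCubicDecayProfile g a) (t : ℝ) :
    HasDerivAt (fun s => g s - s * deriv g s) (-(t * deriv (deriv g) t)) t := by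
  refine ((h.hasDerivAt t).sub ((hasDerivAt_id t).mul (h.hasDerivAt_deriv t))).congr_deriv ?_
  simp

theorem sub_mul_deriv_le (h : IsCubicDecayProfile g a) (ht : 0 ≤ t) :
    g t - t * deriv g t ≤ g 0 :=
  le_of_hasDerivAt_le (fun s _ => h.hasDerivAt_sub_mul_deriv s) (fun s _ => hasDerivAt_const s _)
    (by simp) (fun s hs => neg_nonpos.2 (mul_nonneg hs (h.deriv2_nonneg hs))) ht

theorem le_sub_mul_deriv (h : IsCubicDecayProfile g a) (ht : 0 ≤ t) :
    g 0 - a ≤ g t - t * deriv g t := by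
  have hbound : -(g t - t * deriv g t) ≤ a - g 0 + -(a / (1 + t)) := by
    refine le_of_hasDerivAt_le (fun s _ => (h.hasDerivAt_sub_mul_deriv s).neg)
      (fun s hs => (hasDerivAt_neg_div_one_add a hs).const_add (a - g 0)) (by simp)
      (fun s hs => ?_) ht
    calc -(-(s * deriv (deriv g) s)) = s * deriv (deriv g) s := neg_neg _
      _ ≤ (1 + s) * (a / (1 + s) ^ 3) :=
        mul_le_mul (by linarith) (h.deriv2_le s hs) (h.deriv2_nonneg hs) (by linarith)
      _ = a / (1 + s) ^ 2 := by field_simp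
  have : 0 ≤ a / (1 + t) := div_nonneg h.nonneg (by linarith)
  linarith

theorem sub_le_mul (h : IsCubicDecayProfile g a) (ht : 0 ≤ t) : g t - g 0 ≤ t * a := by
  have hderiv : deriv g t ≤ a :=
    (h.deriv_le ht).trans (sub_le_self _ (div_nonneg h.nonneg (by linarith)))
  linarith [h.sub_mul_deriv_le ht, mul_le_mul_of_nonneg_left hderiv ht]

theorem one_le_add (h : IsCubicDecayProfile g a) (ht : 0 ≤ t) : 1 ≤ g t + (1 + a - g 0) := by
  have hsq : t * deriv g t = t ^ 2 * dslope (deriv g) 0 t := by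
    rw [h.deriv_eq_mul_dslope]; ring
  linarith [h.le_sub_mul_deriv ht, mul_nonneg (sq_nonneg t) (h.dslope_nonneg ht)]

theorem one_le_sub_mul_deriv_add (h : IsCubicDecayProfile g a) (ht : 0 ≤ t) :
    1 ≤ g t - t * deriv g t + (1 + a - g 0) := by
  linarith [h.le_sub_mul_deriv ht]

theorem deriv2_mul_le (h : IsCubicDecayProfile g a) (ht : 0 ≤ t) :
    deriv (deriv g) t * (g t + (1 + a - g 0)) ≤ (1 + a) ^ 2 / (1 + t ^ 2) := by
  have ha := h.nonneg
  rw [le_div_iff₀ (by positivity)]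
  calc deriv (deriv g) t * (g t + (1 + a - g 0)) * (1 + t ^ 2)
      ≤ a / (1 + t) ^ 3 * ((1 + a) * (1 + t)) * (1 + t) ^ 2 :=
        mul_le_mul
          (mul_le_mul (h.deriv2_le t ht) (by nlinarith [h.sub_le_mul ht])
            (zero_le_one.trans (h.one_le_add ht)) (by positivity))
          (by nlinarith) (by positivity) (by positivity)
    _ = a * (1 + a) := by field_simp
    _ ≤ (1 + a) ^ 2 := by nlinarith

theorem dslope_mul_le (h : IsCubicDecayProfile g a) (ht : 0 ≤ t) :
    dslope (deriv g) 0 t * (g t - t * deriv g t + (1 + a - g 0)) ≤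
      (1 + a) ^ 2 / (1 + t ^ 2) * (g t + (1 + a - g 0)) := by
  have ha := h.nonneg
  have hlow := h.one_le_sub_mul_deriv_add ht
  have hup := h.sub_mul_deriv_le ht
  have hk := h.dslope_nonneg ht
  have hka := h.dslope_le ht
  have hsq : t * deriv g t = t ^ 2 * dslope (deriv g) 0 t := by
    rw [h.deriv_eq_mul_dslope]; ring
  rw [div_mul_eq_mul_div, le_div_iff₀ (by positivity), show g t + (1 + a - g 0) =
    g t - t * deriv g t + (1 + a - g 0) + t * deriv g t by ring, hsq]
  rw [hsq] at hlow hup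
  set k := dslope (deriv g) 0 t
  set n := g t - t ^ 2 * k + (1 + a - g 0)
  calc k * n * (1 + t ^ 2) = n * k + t ^ 2 * k * n := by ring
    _ ≤ n * (1 + a) ^ 2 + t ^ 2 * k * (1 + a) ^ 2 := by
      gcongr <;> nlinarith
    _ = (1 + a) ^ 2 * (n + t ^ 2 * k) := by ring

theorem sq_deriv2_mul_le (h : IsCubicDecayProfile g a) (ht : 0 ≤ t) :
    (deriv (deriv g) t * (g t + (1 + a - g 0))) ^ 2 ≤ (1 + a) ^ 2 / (1 + t ^ 2)
      * deriv (deriv g) t * ((g t + (1 + a - g 0)) * (g t - t * deriv g t + (1 + a - g 0))) := by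
  have hm := h.one_le_add ht
  have hn := h.one_le_sub_mul_deriv_add ht
  have hl := h.deriv2_nonneg ht
  have hlm := h.deriv2_mul_le ht
  set l := deriv (deriv g) t
  set m := g t + (1 + a - g 0)
  set n := g t - t * deriv g t + (1 + a - g 0)
  calc (l * m) ^ 2 = l * m * (l * m) * 1 := by ring
    _ ≤ (1 + a) ^ 2 / (1 + t ^ 2) * (l * m) * n := by gcongr
    _ = (1 + a) ^ 2 / (1 + t ^ 2) * l * (m * n) := by ring

theorem sq_dslope_mul_le (h : IsCubicDecayProfile g a) (ht : 0 ≤ t) :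
    (dslope (deriv g) 0 t * (g t - t * deriv g t + (1 + a - g 0))) ^ 2 ≤
      (1 + a) ^ 2 / (1 + t ^ 2) * dslope (deriv g) 0 t
        * ((g t + (1 + a - g 0)) * (g t - t * deriv g t + (1 + a - g 0))) := by
  have hn := h.one_le_sub_mul_deriv_add ht
  have hk := h.dslope_nonneg ht
  have hkn := h.dslope_mul_le ht
  set k := dslope (deriv g) 0 t
  set m := g t + (1 + a - g 0)
  set n := g t - t * deriv g t + (1 + a - g 0)
  calc (k * n) ^ 2 = k * n * (k * n) := sq _
    _ ≤ (1 + a) ^ 2 / (1 + t ^ 2) * m * (k * n) := by gcongr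
    _ = (1 + a) ^ 2 / (1 + t ^ 2) * k * (m * n) := by ring

end IsCubicDecayProfile

theorem isCubicDecayProfile_of_deriv2_le_rpow {g : ℝ → ℝ} {a μ : ℝ} (hg : ContDiff ℝ 2 g)
    (hg'0 : deriv g 0 = 0) (hg'' : ∀ t, 0 < t → 0 < deriv (deriv g) t) (ha : 0 ≤ a) (hμ : 3 ≤ μ)
    (hell : ∀ t, 0 ≤ t → deriv (deriv g) t ≤ a * (1 + t) ^ (-μ)) : IsCubicDecayProfile g a where
  contDiff := hg
  deriv_zero := hg'0
  deriv2_pos := hg''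
  deriv2_le t ht := (hell t ht).trans <| calc
    a * (1 + t) ^ (-μ) ≤ a * (1 + t) ^ (-(3 : ℝ)) :=
      mul_le_mul_of_nonneg_left (Real.rpow_le_rpow_of_exponent_le (by linarith) (by linarith)) ha
    _ = a / (1 + t) ^ 3 := by
      rw [Real.rpow_neg (by positivity), div_eq_mul_inv]
      norm_cast

end Profile

section EnergyMomentum

variable {E : Type*} [NormedAddCommGroup E] [InnerProductSpace ℝ E]
  [CompleteSpace E]

/-- The energy-momentum tensor `(F z - ⟪∇ F z, z⟫ + c) id + ∇ F z ⊗ z` of the integrand `F + c`.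
Its rows are the conservation laws that Noether's theorem attaches to translations. -/
noncomputable def energyMomentum (F : E → ℝ) (c : ℝ) (z : E) : E →L[ℝ] E :=
  (F z - ⟪∇ F z, z⟫ + c) • ContinuousLinearMap.id ℝ E + (innerSL ℝ z).smulRight (∇ F z)

theorem energyMomentum_apply (F : E → ℝ) (c : ℝ) (z v : E) :
    energyMomentum F c z v = (F z - ⟪∇ F z, z⟫ + c) • v + ⟪z, v⟫ • ∇ F z := by
  simp [energyMomentum]

theorem hasFDerivAt_sub_inner_gradient_comp {F : E → ℝ} {Z : E → E} {x : E}
    (hF : DifferentiableAt ℝ F (Z x)) (hS : DifferentiableAt ℝ (fun y => ∇ F (Z y)) x)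
    (hZ : DifferentiableAt ℝ Z x) :
    HasFDerivAt (fun y => F (Z y) - ⟪∇ F (Z y), Z y⟫)
      (-(innerSL ℝ (Z x) ∘L fderiv ℝ (fun y => ∇ F (Z y)) x)) x := by
  have hFZ := hF.hasGradientAt.hasFDerivAt.comp x hZ.hasFDerivAt
  refine (hFZ.sub (hS.hasFDerivAt.inner ℝ hZ.hasFDerivAt)).congr_fderiv ?_
  ext v
  simp [real_inner_comm]

theorem differentiable_energyMomentum_comp {F : E → ℝ} {Z : E → E} (c : ℝ)
    (hF : Differentiable ℝ F) (hS : ContDiff ℝ 1 (∇ F)) (hZ : ContDiff ℝ 1 Z) :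
    Differentiable ℝ fun y => energyMomentum F c (Z y) := by
  have hσ : Differentiable ℝ (fun y => ∇ F (Z y)) := (hS.comp hZ).differentiable one_ne_zero
  have hZd : Differentiable ℝ Z := hZ.differentiable one_ne_zero
  have htensor : Differentiable ℝ fun y => (innerSL ℝ (Z y)).smulRight (∇ F (Z y)) :=
    (((innerSL ℝ).contDiff.comp hZ).smulRight (hS.comp hZ)).differentiable one_ne_zero
  exact ((((hF.comp hZd).sub (hσ.inner ℝ hZd)).add_const c).smul_const _).add htensor

theorem fderiv_energyMomentum_comp_apply {F : E → ℝ} {Z : E → E} (c : ℝ)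
    (hF : Differentiable ℝ F) (hS : ContDiff ℝ 1 (∇ F)) (hZ : ContDiff ℝ 1 Z) (x v w : E) :
    fderiv ℝ (fun y => energyMomentum F c (Z y)) x v w =
      -⟪Z x, fderiv ℝ (fun y => ∇ F (Z y)) x v⟫ • w
        + ⟪Z x, w⟫ • fderiv ℝ (fun y => ∇ F (Z y)) x v
        + ⟪fderiv ℝ Z x v, w⟫ • ∇ F (Z x) := by
  have hσ : DifferentiableAt ℝ (fun y => ∇ F (Z y)) x :=
    (hS.comp hZ).differentiable one_ne_zero x
  have hZx : DifferentiableAt ℝ Z x := hZ.differentiable one_ne_zero x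
  have happly := (((hasFDerivAt_sub_inner_gradient_comp (hF (Z x)) hσ hZx).add_const c).smul_const
    w).fun_add ((hZx.hasFDerivAt.inner ℝ (hasFDerivAt_const w x)).fun_smul hσ.hasFDerivAt)
  have heval := (differentiable_energyMomentum_comp c hF hS hZ x).hasFDerivAt.clm_apply
    (hasFDerivAt_const w x)
  simp only [energyMomentum_apply] at heval
  simpa [add_assoc] using congr($(heval.unique happly) v)

variable {g : ℝ → ℝ} {z : E}

theorem energyMomentum_comp_norm_apply (hg : Differentiable ℝ g) (hg0 : deriv g 0 = 0) (c : ℝ)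
    (z v : E) :
    energyMomentum (fun z : E => g ‖z‖) c z v =
      (g ‖z‖ - ‖z‖ * deriv g ‖z‖ + c) • v + (dslope (deriv g) 0 ‖z‖ * ⟪z, v⟫) • z := by
  rw [energyMomentum_apply, (hasGradientAt_comp_norm hg hg0 z).gradient, radialField,
    inner_smul_left, real_inner_self_eq_norm_sq, ← mul_dslope_zero hg0, smul_smul]
  simp only [conj_trivial, mul_comm ⟪z, v⟫]
  congr 3
  ring

theorem energyMomentum_comp_norm_apply_direction (hg : Differentiable ℝ g) (hg0 : deriv g 0 = 0)
    (c : ℝ) {e : E} (he : ‖e‖ = 1) (hz : ‖z‖ • e = z) :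
    energyMomentum (fun z : E => g ‖z‖) c z e = (g ‖z‖ + c) • e := by
  have hsmul (s : ℝ) : s • z = (s * ‖z‖) • e := by rw [mul_smul, hz]
  rw [energyMomentum_comp_norm_apply hg hg0, inner_eq_norm_of_norm_smul_eq he hz, hsmul,
    ← add_smul, ← mul_dslope_zero hg0]
  congr 1
  ring

theorem energyMomentum_comp_norm_apply_of_inner_eq_zero (hg : Differentiable ℝ g)
    (hg0 : deriv g 0 = 0) (c : ℝ) {v : E} (hv : ⟪z, v⟫ = 0) :
    energyMomentum (fun z : E => g ‖z‖) c z v = (g ‖z‖ - ‖z‖ * deriv g ‖z‖ + c) • v := by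
  simp [energyMomentum_comp_norm_apply hg hg0, hv]

variable {b : OrthonormalBasis (Fin 2) ℝ E}

theorem det_energyMomentum_comp_norm (hg : Differentiable ℝ g) (hg0 : deriv g 0 = 0) (c : ℝ)
    (hz : ‖z‖ • b 0 = z) :
    (energyMomentum (fun z : E => g ‖z‖) c z).det =
      (g ‖z‖ + c) * (g ‖z‖ - ‖z‖ * deriv g ‖z‖ + c) :=
  det_eq_mul_of_apply_eq_smul b
    (energyMomentum_comp_norm_apply_direction hg hg0 c (b.norm_eq_one 0) hz)
    (energyMomentum_comp_norm_apply_of_inner_eq_zero hg hg0 c (inner_eq_zero_of_norm_smul_eq b hz))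

theorem norm_energyMomentum_comp_norm_radialFieldDeriv_sq (hg : Differentiable ℝ g)
    (hg0 : deriv g 0 = 0) (c : ℝ) (hz : ‖z‖ • b 0 = z) (v : E) :
    ‖energyMomentum (fun z : E => g ‖z‖) c z (radialFieldDeriv (deriv g) z v)‖ ^ 2 =
      (deriv (deriv g) ‖z‖ * (g ‖z‖ + c)) ^ 2 * ⟪b 0, v⟫ ^ 2
        + (dslope (deriv g) 0 ‖z‖ * (g ‖z‖ - ‖z‖ * deriv g ‖z‖ + c)) ^ 2 * ⟪b 1, v⟫ ^ 2 := by
  have horth := inner_eq_zero_of_norm_smul_eq b hz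
  conv_lhs => rw [eq_inner_smul_add_inner_smul b v]
  simp only [map_smul, map_add, radialFieldDeriv_apply_direction (b.norm_eq_one 0) hz,
    radialFieldDeriv_apply_of_inner_eq_zero horth,
    energyMomentum_comp_norm_apply_direction hg hg0 c (b.norm_eq_one 0) hz,
    energyMomentum_comp_norm_apply_of_inner_eq_zero hg hg0 c horth, smul_smul]
  rw [norm_smul_add_smul_sq_of_orthonormalBasis]
  ring

end EnergyMomentum

section Planar

variable {E : Type*} [NormedAddCommGroup E] [InnerProductSpace ℝ E] [FiniteDimensional ℝ E]

theorem exists_hasFDerivAt_energyMomentum (hE : finrank ℝ E = 2)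
    {F : E → ℝ} {Z : E → E} (c : ℝ)
    (hF : Differentiable ℝ F) (hS : ContDiff ℝ 1 (∇ F)) (hZ : ContDiff ℝ 1 Z)
    (hsymm : ∀ x, (fderiv ℝ Z x : E →ₗ[ℝ] E).IsSymmetric)
    (hdiv : ∀ x, divergence (fun y => ∇ F (Z y)) x = 0) :
    ∃ Λ : E → E, ∀ x, HasFDerivAt Λ (energyMomentum F c (Z x)) x := by
  have hcurl (x v w : E) : fderiv ℝ (fun y => energyMomentum F c (Z y)) x v w =
      fderiv ℝ (fun y => energyMomentum F c (Z y)) x w v := by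
    have hH : ⟪fderiv ℝ Z x v, w⟫ = ⟪fderiv ℝ Z x w, v⟫ :=
      (hsymm x v w).trans (real_inner_comm _ _)
    have htrace := trace_smul_inner_smul_sub_inner_smul hE
      (fderiv ℝ (fun y => ∇ F (Z y)) x) (Z x) v w
    rw [← divergence, hdiv x, zero_smul] at htrace
    rw [fderiv_energyMomentum_comp_apply c hF hS hZ, fderiv_energyMomentum_comp_apply c hF hS hZ,
      hH, add_left_inj, ← sub_eq_zero, htrace]
    module
  obtain ⟨Λ, hΛ⟩ := convex_univ.exists_forall_hasFDerivAt_of_fderiv_symmetric isOpen_univ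
    (differentiable_energyMomentum_comp c hF hS hZ).differentiableOn fun x _ => hcurl x
  exact ⟨Λ, fun x => hΛ x (mem_univ x)⟩

end Planar

section Dissipation

variable {E : Type*} [NormedAddCommGroup E] [InnerProductSpace ℝ E]

theorem dslope_arctan_pos {t : ℝ} (ht : 0 ≤ t) : 0 < dslope Real.arctan 0 t := by
  rcases ht.eq_or_lt with rfl | hpos
  · simp
  · rw [dslope_of_ne _ hpos.ne', slope_def_field]
    simpa using div_pos (Real.arctan_pos.2 hpos) hpos

theorem arctan_sq_le_four (t : ℝ) : Real.arctan t ^ 2 ≤ 4 := by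
  nlinarith [Real.arctan_lt_pi_div_two t, Real.neg_pi_div_two_lt_arctan t, Real.pi_lt_four]

/-- The integrand `tr(DΦ ∘ Dσ)` obtained by testing the differentiated equation `div σ = 0` with
`Φ = radialField arctan ∘ Z`, where `σ = radialField g' ∘ Z`, at a point where `Z` has value `z` and
derivative `H`. -/
noncomputable def dissipation (g : ℝ → ℝ) (z : E) (H : E →L[ℝ] E) : ℝ :=
  LinearMap.trace ℝ E ((radialFieldDeriv Real.arctan z ∘L H) ∘L (radialFieldDeriv (deriv g) z ∘L H))

variable {g : ℝ → ℝ} {a : ℝ} {z : E} {H : E →L[ℝ] E}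

theorem dissipation_eq (g : ℝ → ℝ) (hH : (H : E →ₗ[ℝ] E).IsSymmetric)
    {b : OrthonormalBasis (Fin 2) ℝ E} (hz : ‖z‖ • b 0 = z) :
    dissipation g z H =
      1 / (1 + ‖z‖ ^ 2) * deriv (deriv g) ‖z‖ * ⟪b 0, H (b 0)⟫ ^ 2
        + (1 / (1 + ‖z‖ ^ 2) * dslope (deriv g) 0 ‖z‖
          + dslope Real.arctan 0 ‖z‖ * deriv (deriv g) ‖z‖) * ⟪b 1, H (b 0)⟫ ^ 2
        + dslope Real.arctan 0 ‖z‖ * dslope (deriv g) 0 ‖z‖ * ⟪b 1, H (b 1)⟫ ^ 2 := by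
  have horth := inner_eq_zero_of_norm_smul_eq b hz
  rw [dissipation, trace_comp_comp_of_apply_eq_smul b
    (radialFieldDeriv_apply_direction (b.norm_eq_one 0) hz)
    (radialFieldDeriv_apply_of_inner_eq_zero horth)
    (radialFieldDeriv_apply_direction (b.norm_eq_one 0) hz)
    (radialFieldDeriv_apply_of_inner_eq_zero horth) hH, Real.deriv_arctan]

namespace IsCubicDecayProfile

theorem le_dissipation (h : IsCubicDecayProfile g a) (hH : (H : E →ₗ[ℝ] E).IsSymmetric)
    {b : OrthonormalBasis (Fin 2) ℝ E} (hz : ‖z‖ • b 0 = z) :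
    1 / (1 + ‖z‖ ^ 2) * (deriv (deriv g) ‖z‖ * ⟪b 0, H (b 0)⟫ ^ 2
      + dslope (deriv g) 0 ‖z‖ * ⟪b 1, H (b 0)⟫ ^ 2) ≤ dissipation g z H := by
  have hl := h.deriv2_nonneg (norm_nonneg z)
  have hk := h.dslope_nonneg (norm_nonneg z)
  have hk' := (dslope_arctan_pos (norm_nonneg z)).le
  rw [dissipation_eq g hH hz, ← sub_nonneg]
  ring_nf
  positivity

variable [FiniteDimensional ℝ E]

theorem dissipation_nonneg (h : IsCubicDecayProfile g a) (hE : finrank ℝ E = 2)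
    (hH : (H : E →ₗ[ℝ] E).IsSymmetric) : 0 ≤ dissipation g z H := by
  obtain ⟨b, hz⟩ := exists_orthonormalBasis_norm_smul_eq hE z
  have hl := h.deriv2_nonneg (norm_nonneg z)
  have hk := h.dslope_nonneg (norm_nonneg z)
  exact le_trans (by positivity) (h.le_dissipation hH hz)

theorem eq_zero_of_dissipation_eq_zero (h : IsCubicDecayProfile g a) (hE : finrank ℝ E = 2)
    (hH : (H : E →ₗ[ℝ] E).IsSymmetric) (hz0 : z ≠ 0) (hdiss : dissipation g z H = 0) : H = 0 := by
  obtain ⟨b, hz⟩ := exists_orthonormalBasis_norm_smul_eq hE z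
  have hl := h.deriv2_pos _ (norm_pos_iff.2 hz0)
  have hk := h.dslope_pos (norm_pos_iff.2 hz0)
  have hk' := dslope_arctan_pos (norm_nonneg z)
  rw [dissipation_eq g hH hz, add_eq_zero_iff_of_nonneg (by positivity) (by positivity),
    add_eq_zero_iff_of_nonneg (by positivity) (by positivity)] at hdiss
  obtain ⟨⟨h00, h10⟩, h11⟩ := hdiss
  refine eq_zero_of_isSymmetric_of_inner_eq_zero b hH ?_ ?_ ?_
  · exact pow_eq_zero_iff two_ne_zero |>.1 ((mul_eq_zero_iff_left (by positivity)).1 h00)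
  · exact pow_eq_zero_iff two_ne_zero |>.1 ((mul_eq_zero_iff_left (by positivity)).1 h10)
  · exact pow_eq_zero_iff two_ne_zero |>.1 ((mul_eq_zero_iff_left (by positivity)).1 h11)

theorem norm_sq_le_inner_energyMomentum (h : IsCubicDecayProfile g a) (z v : E) :
    ‖v‖ ^ 2 ≤ ⟪energyMomentum (fun z : E => g ‖z‖) (1 + a - g 0) z v, v⟫ := by
  rw [energyMomentum_comp_norm_apply h.differentiable h.deriv_zero, inner_add_left,
    real_inner_smul_left, real_inner_smul_left, real_inner_self_eq_norm_sq, mul_assoc, ← sq]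
  exact le_add_of_le_of_nonneg
    (le_mul_of_one_le_left (sq_nonneg _) (h.one_le_sub_mul_deriv_add (norm_nonneg z)))
    (mul_nonneg (h.dslope_nonneg (norm_nonneg z)) (sq_nonneg _))

theorem norm_energyMomentum_radialFieldDeriv_sq_le (h : IsCubicDecayProfile g a)
    {b : OrthonormalBasis (Fin 2) ℝ E} (hz : ‖z‖ • b 0 = z) (v : E) :
    ‖energyMomentum (fun z : E => g ‖z‖) (1 + a - g 0) z (radialFieldDeriv (deriv g) z v)‖ ^ 2 ≤
      (1 + a) ^ 2 * (1 / (1 + ‖z‖ ^ 2) * (deriv (deriv g) ‖z‖ * ⟪b 0, v⟫ ^ 2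
          + dslope (deriv g) 0 ‖z‖ * ⟪b 1, v⟫ ^ 2)
        * (energyMomentum (fun z : E => g ‖z‖) (1 + a - g 0) z).det) := by
  rw [norm_energyMomentum_comp_norm_radialFieldDeriv_sq h.differentiable h.deriv_zero _ hz,
    det_energyMomentum_comp_norm h.differentiable h.deriv_zero _ hz]
  refine (add_le_add
    (mul_le_mul_of_nonneg_right (h.sq_deriv2_mul_le (norm_nonneg z)) (sq_nonneg _))
    (mul_le_mul_of_nonneg_right (h.sq_dslope_mul_le (norm_nonneg z)) (sq_nonneg _))).trans_eq ?_
  ring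

theorem norm_energyMomentum_flux_sq_le (h : IsCubicDecayProfile g a) (hE : finrank ℝ E = 2)
    (hH : (H : E →ₗ[ℝ] E).IsSymmetric) :
    ‖energyMomentum (fun z : E => g ‖z‖) (1 + a - g 0) z
        (radialFieldDeriv (deriv g) z (H (radialField Real.arctan z)))‖ ^ 2 ≤
      4 * (1 + a) ^ 2 * (dissipation g z H *
        |(energyMomentum (fun z : E => g ‖z‖) (1 + a - g 0) z).det|) := by
  obtain ⟨b, hz⟩ := exists_orthonormalBasis_norm_smul_eq hE z
  have hfield : radialField Real.arctan z = Real.arctan ‖z‖ • b 0 := by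
    rw [radialField, ← mul_dslope_zero Real.arctan_zero, mul_comm, mul_smul, hz]
  rw [hfield, map_smul, map_smul, map_smul, norm_smul, mul_pow, Real.norm_eq_abs, sq_abs,
    mul_assoc 4]
  refine mul_le_mul (arctan_sq_le_four _)
    ((h.norm_energyMomentum_radialFieldDeriv_sq_le hz _).trans ?_) (sq_nonneg _) zero_le_four
  have hl := h.deriv2_nonneg (norm_nonneg z)
  have hk := h.dslope_nonneg (norm_nonneg z)
  refine mul_le_mul_of_nonneg_left ?_ (sq_nonneg _)
  exact (mul_le_mul_of_nonneg_left (le_abs_self _) (by positivity)).trans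
    (mul_le_mul_of_nonneg_right (h.le_dissipation hH hz) (abs_nonneg _))

end IsCubicDecayProfile

end Dissipation

section Gradient

variable {E : Type*} [NormedAddCommGroup E] [InnerProductSpace ℝ E] [CompleteSpace E] {u : E → ℝ}

theorem contDiff_gradient (hu : ContDiff ℝ 2 u) : ContDiff ℝ 1 (∇ u) :=
  (InnerProductSpace.toDual ℝ E).symm.toContinuousLinearEquiv.contDiff.comp
    (hu.fderiv_right (m := 1) one_add_one_eq_two.le)

theorem isSymmetric_fderiv_gradient (hu : ContDiff ℝ 2 u) (x : E) :
    (fderiv ℝ (∇ u) x : E →ₗ[ℝ] E).IsSymmetric := by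
  have hinner (v w : E) : ⟪fderiv ℝ (∇ u) x v, w⟫ = fderiv ℝ (fderiv ℝ u) x v w := by
    have hgradient := ((contDiff_gradient hu).differentiable one_ne_zero x).hasFDerivAt.inner ℝ
      (hasFDerivAt_const w x)
    have hderiv := ((hu.fderiv_right (m := 1) one_add_one_eq_two.le).differentiable one_ne_zero
      x).hasFDerivAt.clm_apply (hasFDerivAt_const w x)
    simp only [inner_gradient_left] at hgradient
    simpa using congr($(hgradient.unique hderiv) v)
  intro v w
  rw [ContinuousLinearMap.coe_coe, hinner, real_inner_comm, hinner]
  exact hu.contDiffAt.isSymmSndFDerivAt (by simp) v w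

theorem eq_inner_add_of_gradient_eq {A : E} (hu : Differentiable ℝ u) (hA : ∀ x, ∇ u x = A)
    (x : E) : u x = ⟪A, x⟫ + u 0 := by
  have hderiv (y : E) : HasFDerivAt (fun y => u y - ⟪A, y⟫) (0 : E →L[ℝ] ℝ) y := by
    refine ((hu y).hasGradientAt.hasFDerivAt.sub (innerSL ℝ A).hasFDerivAt).congr_fderiv ?_
    rw [hA]
    exact sub_self _
  have h := is_const_of_fderiv_eq_zero (fun y => (hderiv y).differentiableAt)
    (fun y => (hderiv y).fderiv) x 0
  simp only [inner_zero_right, sub_zero] at h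
  linarith

end Gradient

section Rigidity

theorem is_const_of_fderiv_eq_zero_of_ne_zero {E F : Type*} [NormedAddCommGroup E]
    [NormedSpace ℝ E] [NormedAddCommGroup F] [InnerProductSpace ℝ F] {Z : E → F}
    (hZ : Differentiable ℝ Z) (h : ∀ x, Z x ≠ 0 → fderiv ℝ Z x = 0) (x y : E) : Z x = Z y := by
  have hderiv (x : E) : HasFDerivAt (fun x => ‖Z x‖ ^ 2) (0 : E →L[ℝ] ℝ) x := by
    refine (hZ x).hasFDerivAt.norm_sq.congr_fderiv ?_
    by_cases hx : Z x = 0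
    · simp [hx]
    · simp [h x hx]
  have hnorm (x y : E) : ‖Z x‖ = ‖Z y‖ :=
    (pow_left_inj₀ (norm_nonneg _) (norm_nonneg _) two_ne_zero).1
      (is_const_of_fderiv_eq_zero (fun x => (hderiv x).differentiableAt)
        (fun x => (hderiv x).fderiv) x y)
  by_cases hx : Z x = 0
  · rw [hx, eq_comm, ← norm_eq_zero, hnorm y x, hx, norm_zero]
  · refine is_const_of_fderiv_eq_zero hZ (fun y => h y ?_) x y
    rwa [← norm_ne_zero_iff, hnorm y x, norm_ne_zero_iff]

variable {E : Type*} [NormedAddCommGroup E] [InnerProductSpace ℝ E] [FiniteDimensional ℝ E]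
  {g : ℝ → ℝ} {a : ℝ} {Z : E → E}

namespace IsCubicDecayProfile

theorem gradient_comp_norm (h : IsCubicDecayProfile g a) :
    ∇ (fun z : E => g ‖z‖) = radialField (deriv g) :=
  funext fun z => (hasGradientAt_comp_norm h.differentiable h.deriv_zero z).gradient

theorem exists_antilipschitzWith_hasFDerivAt_energyMomentum (h : IsCubicDecayProfile g a)
    (hE : finrank ℝ E = 2) (hZ : ContDiff ℝ 1 Z)
    (hsymm : ∀ x, (fderiv ℝ Z x : E →ₗ[ℝ] E).IsSymmetric)
    (hdiv : ∀ x, divergence (fun y => ∇ (fun z : E => g ‖z‖) (Z y)) x = 0) :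
    ∃ Λ : E → E, ContDiff ℝ 1 Λ ∧ AntilipschitzWith 1 Λ ∧
      ∀ x, fderiv ℝ Λ x = energyMomentum (fun z : E => g ‖z‖) (1 + a - g 0) (Z x) := by
  have hF : Differentiable ℝ fun z : E => g ‖z‖ := fun z =>
    (hasGradientAt_comp_norm h.differentiable h.deriv_zero z).differentiableAt
  have hS : ContDiff ℝ 1 (∇ fun z : E => g ‖z‖) := by
    rw [h.gradient_comp_norm]
    exact contDiff_radialField h.contDiff_deriv
  obtain ⟨Λ, hΛ⟩ := exists_hasFDerivAt_energyMomentum hE (1 + a - g 0) hF hS hZ hsymm hdiv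
  refine ⟨Λ, contDiff_one_iff_hasFDerivAt.2
    ⟨_, (differentiable_energyMomentum_comp _ hF hS hZ).continuous, hΛ⟩,
    antilipschitzWith_one_of_norm_sq_le_inner_fderiv (fun x => (hΛ x).differentiableAt)
      fun x v => ?_, fun x => (hΛ x).fderiv⟩
  rw [(hΛ x).fderiv]
  exact h.norm_sq_le_inner_energyMomentum (Z x) v

theorem dissipation_fderiv_eq_zero (h : IsCubicDecayProfile g a)
    (hE : finrank ℝ E = 2) (hZ : ContDiff ℝ 1 Z)
    (hsymm : ∀ x, (fderiv ℝ Z x : E →ₗ[ℝ] E).IsSymmetric)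
    (hdiv : ∀ x, divergence (fun y => ∇ (fun z : E => g ‖z‖) (Z y)) x = 0) (x : E) :
    dissipation g (Z x) (fderiv ℝ Z x) = 0 := by
  borelize E
  obtain ⟨Λ, hΛ, hanti, hΛ'⟩ :=
    h.exists_antilipschitzWith_hasFDerivAt_energyMomentum hE hZ hsymm hdiv
  have hproper : Tendsto Λ (cocompact E) (cocompact E) := by
    simpa only [cobounded_eq_cocompact] using hanti.tendsto_cobounded
  simp only [h.gradient_comp_norm] at hdiv
  have hZx (x : E) : DifferentiableAt ℝ Z x := hZ.differentiable one_ne_zero x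
  have harctan : ContDiff ℝ 1 Real.arctan := Real.contDiff_arctan
  have hσ : ContDiff ℝ 1 fun y => radialField (deriv g) (Z y) :=
    (contDiff_radialField h.contDiff_deriv).comp hZ
  have hΦ : ContDiff ℝ 1 fun y => radialField Real.arctan (Z y) :=
    (contDiff_radialField harctan).comp hZ
  have hdissipation (x : E) : dissipation g (Z x) (fderiv ℝ Z x) =
      LinearMap.trace ℝ E (fderiv ℝ (fun y => radialField Real.arctan (Z y)) x ∘L
        fderiv ℝ (fun y => radialField (deriv g) (Z y)) x) := by
    rw [dissipation, fderiv_radialField_comp harctan (hZx x),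
      fderiv_radialField_comp h.contDiff_deriv (hZx x)]
  refine eq_zero_of_weak_divergence_of_sq_norm_le (μ := Measure.addHaar) (C := 4 * (1 + a) ^ 2)
    (L := fun x => dissipation g (Z x) (fderiv ℝ Z x))
    (X := fun x =>
      fderiv ℝ (fun y => radialField (deriv g) (Z y)) x (radialField Real.arctan (Z x)))
    hE hΛ hanti.injective hproper ?_ ?_ (fun x => h.dissipation_nonneg hE (hsymm x))
    (fun ω hω hc => ?_) (by positivity) (fun x => ?_) x
  · exact (hσ.continuous_fderiv one_ne_zero).clm_apply hΦ.continuous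
  · simp only [hdissipation]
    exact continuous_trace.comp ((hΦ.continuous_fderiv one_ne_zero).clm_comp
      (hσ.continuous_fderiv one_ne_zero))
  · simp only [hdissipation]
    exact integral_mul_trace_fderiv_comp_fderiv hσ hdiv hΦ hω hc
  · rw [hΛ', fderiv_radialField_comp h.contDiff_deriv (hZx x)]
    exact h.norm_energyMomentum_flux_sq_le hE (hsymm x)

end IsCubicDecayProfile

end Rigidity

theorem statement3_general {E : Type*} [NormedAddCommGroup E] [InnerProductSpace ℝ E]
    [FiniteDimensional ℝ E] (hE : finrank ℝ E = 2) {g : ℝ → ℝ} {a : ℝ}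
    (hg : IsCubicDecayProfile g a) {u : E → ℝ} (hu : ContDiff ℝ 2 u)
    (hdiv : ∀ x, divergence (fun y => ∇ (fun z : E => g ‖z‖) (∇ u y)) x = 0) :
    ∃ (A : E) (a : ℝ), ∀ x, u x = ⟪A, x⟫ + a := by
  have hrigid (x : E) (hx : ∇ u x ≠ 0) : fderiv ℝ (∇ u) x = 0 :=
    hg.eq_zero_of_dissipation_eq_zero hE (isSymmetric_fderiv_gradient hu x) hx
      (hg.dissipation_fderiv_eq_zero hE (contDiff_gradient hu) (isSymmetric_fderiv_gradient hu)
        hdiv x)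
  have hconst (x : E) : ∇ u x = ∇ u 0 :=
    is_const_of_fderiv_eq_zero_of_ne_zero ((contDiff_gradient hu).differentiable one_ne_zero)
      hrigid x 0
  exact ⟨∇ u 0, u 0, eq_inner_add_of_gradient_eq (hu.differentiable two_ne_zero) hconst⟩

/-- Bernstein-type theorem.  If `g ∈ C²([0,∞))` satisfies `g'(0) = 0`,
`g'' > 0` on `(0,∞)`, the linear growth bounds `a₁t − a₂ ≤ g(t) ≤ a₃t + a₄`, and
`g''(t) ≤ a₅(1+t)^(−μ)` with `μ ≥ 3`, then every `C²` entire solution of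
`div[∇F(∇u)] = 0` with `F(Z) = g(|Z|)` is affine. -/
theorem statement3 (g : ℝ → ℝ) (hg : ContDiff ℝ 2 g)
    (a₁ a₂ a₃ a₄ a₅ μ : ℝ) (ha₁ : 0 < a₁) (ha₂ : 0 ≤ a₂) (ha₃ : 0 < a₃) (ha₄ : 0 ≤ a₄)
    (ha₅ : 0 < a₅) (hμ : 3 ≤ μ)
    (hg'0 : deriv g 0 = 0)
    (hg'' : ∀ t : ℝ, 0 < t → 0 < deriv (deriv g) t)
    (hgrow : ∀ t : ℝ, 0 ≤ t → a₁ * t - a₂ ≤ g t ∧ g t ≤ a₃ * t + a₄)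
    (hell : ∀ t : ℝ, 0 ≤ t → deriv (deriv g) t ≤ a₅ * (1 + t) ^ (-μ))
    (F : EuclideanSpace ℝ (Fin 2) → ℝ) (hFdef : ∀ Z, F Z = g ‖Z‖)
    (u : EuclideanSpace ℝ (Fin 2) → ℝ) (hu : ContDiff ℝ 2 u)
    (heuler : IsScalarEulerSolution F u) :
    ∃ (A : EuclideanSpace ℝ (Fin 2)) (a : ℝ),
      ∀ x, u x = (∑ α : Fin 2, A α * x α) + a := by
  have hprofile := isCubicDecayProfile_of_deriv2_le_rpow hg hg'0 hg'' ha₅.le hμ hell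
  have hF : ∇ F = radialField (deriv g) := by
    rw [funext hFdef, hprofile.gradient_comp_norm]
  have hσ : Differentiable ℝ fun y => ∇ F (∇ u y) := by
    rw [hF]
    exact ((contDiff_radialField hprofile.contDiff_deriv).comp
      (contDiff_gradient hu)).differentiable one_ne_zero
  obtain ⟨A, a, hA⟩ := statement3_general finrank_euclideanSpace_fin hprofile hu fun x => by
    rw [← funext hFdef, divergence_eq_sum_fderiv_single (hσ x)]
    exact heuler x
  exact ⟨A, a, fun x => by rw [hA x, PiLp.inner_apply]; simp [mul_comm]⟩
end

section
/- Let F ∈ C²(ℝ^(2N)) satisfy the μ-ellipticity lower bound λ(1+|Z|)^(−μ)|Y|² ≤ D²F(Z)(Y,Y) for all Y, Z ∈ ℝ^(2N), with λ > 0 and μ > 1, and set θ(r) := (λ/(μ−1))[1 − (1+r)^(1−μ)] for r ≥ 0. Then for every ε > 0 and every Z ∈ ℝ^(2N) one has |Z| ≤ ε + θ(ε)^(−1) · (∇F(Z) − ∇F(0)) : Z, where A : B denotes the Euclidean inner product of A, B ∈ ℝ^(2N). -/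
open scoped RealInnerProductSpace

/-!
Let `A` be the derivative of `F`. Along the ray `t ↦ t • Z`, ellipticity bounds the derivative of
`t ↦ A (t • Z) Z` below by that of `t ↦ ‖Z‖ * θ (t * ‖Z‖)`, so comparing the endpoints of `[0, 1]`
gives `‖Z‖ * θ ‖Z‖ ≤ (A Z - A 0) Z`. As `θ` is increasing, dividing by `θ ε` gives the claim when
`ε ≤ ‖Z‖`. When `‖Z‖ ≤ ε` it suffices that `(A Z - A 0) Z` is nonnegative.
-/

/-- The function `θ(r) = (λ / (μ - 1)) [1 - (1 + r)^(1 - μ)]`, the primitive of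
`s ↦ λ (1 + s)^(-μ)` vanishing at `0`; it measures the monotonicity of a `μ`-elliptic field.
At `μ = 1`, where this primitive is `λ log (1 + r)`, division by zero makes it `0`. -/
noncomputable def ellipticityModulus (lam μ r : ℝ) : ℝ :=
  lam / (μ - 1) * (1 - (1 + r) ^ (1 - μ))

section Modulus

variable {lam μ : ℝ}

lemma ellipticityModulus_zero : ellipticityModulus lam μ 0 = 0 := by
  simp [ellipticityModulus]

lemma hasDerivAt_ellipticityModulus (hμ : μ ≠ 1) {r : ℝ} (hr : -1 < r) :
    HasDerivAt (ellipticityModulus lam μ) (lam * (1 + r) ^ (-μ)) r := by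
  have hbase : 1 + r ≠ 0 := by linarith
  have hμ' : μ - 1 ≠ 0 := sub_ne_zero.2 hμ
  have hpow := ((hasDerivAt_id r).const_add 1).rpow_const (p := 1 - μ) (Or.inl hbase)
  refine ((hpow.const_sub 1).const_mul (lam / (μ - 1))).congr_deriv ?_
  rw [show 1 - μ - 1 = -μ by ring, id]
  field_simp
  ring

lemma strictMonoOn_ellipticityModulus (hlam : 0 < lam) (hμ : μ ≠ 1) :
    StrictMonoOn (ellipticityModulus lam μ) (Set.Ioi (-1)) := by
  refine strictMonoOn_of_hasDerivWithinAt_pos (convex_Ioi (-1))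
    (f' := fun r => lam * (1 + r) ^ (-μ)) (fun r hr => ?_) (fun r hr => ?_) (fun r hr => ?_)
  · exact (hasDerivAt_ellipticityModulus hμ hr).continuousAt.continuousWithinAt
  · exact (hasDerivAt_ellipticityModulus hμ (interior_subset hr)).hasDerivWithinAt
  · have hbase : 0 < 1 + r := by linarith [Set.mem_Ioi.1 (interior_subset hr)]
    positivity

end Modulus

lemma le_add_inv_mul_of_mul_le {φ : ℝ → ℝ} {ε r D : ℝ} (hφ : MonotoneOn φ (Set.Ici 0))
    (hφ₀ : 0 ≤ φ 0) (hε : 0 ≤ ε) (hφε : 0 < φ ε) (hr : 0 ≤ r) (hD : r * φ r ≤ D) :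
    r ≤ ε + (φ ε)⁻¹ * D := by
  rcases le_total r ε with hrε | hεr
  · have hφr : 0 ≤ φ r := hφ₀.trans (hφ Set.self_mem_Ici hr hr)
    have hD₀ : 0 ≤ D := (mul_nonneg hr hφr).trans hD
    exact hrε.trans (le_add_of_nonneg_right (by positivity))
  · have hrD : r * φ ε ≤ D :=
      (mul_le_mul_of_nonneg_left (hφ hε hr hεr) hr).trans hD
    have hdiv : r ≤ (φ ε)⁻¹ * D := by rwa [inv_mul_eq_div, le_div_iff₀ hφε]
    exact hdiv.trans (le_add_of_nonneg_left hε)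

lemma hasDerivAt_apply_smul {𝕜 E F G : Type*} [NontriviallyNormedField 𝕜]
    [NormedAddCommGroup E] [NormedSpace 𝕜 E] [NormedAddCommGroup F] [NormedSpace 𝕜 F]
    [NormedAddCommGroup G] [NormedSpace 𝕜 G] {A : E → F →L[𝕜] G} {x : E} {t : 𝕜}
    (hA : DifferentiableAt 𝕜 A (t • x)) (y : F) :
    HasDerivAt (fun s : 𝕜 => A (s • x) y) (fderiv 𝕜 A (t • x) x y) t := by
  have hray : HasDerivAt (fun s : 𝕜 => s • x) x t := by
    simpa using (hasDerivAt_id t).smul_const x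
  have hAray : HasDerivAt (fun s : 𝕜 => A (s • x)) (fderiv 𝕜 A (t • x) x) t :=
    hA.hasFDerivAt.comp_hasDerivAt t hray
  exact (ContinuousLinearMap.apply 𝕜 G y).hasFDerivAt.comp_hasDerivAt t hAray

section EllipticField

variable {E : Type*} [NormedAddCommGroup E] [NormedSpace ℝ E] {A : E → StrongDual ℝ E}

lemma norm_mul_sub_le_sub_apply {φ w : ℝ → ℝ} {Z : E} (hA : Differentiable ℝ A)
    (hφ : ∀ r, 0 ≤ r → HasDerivAt φ (w r) r)
    (hw : ∀ t ∈ Set.Ioo (0 : ℝ) 1, w (t * ‖Z‖) * ‖Z‖ ^ 2 ≤ fderiv ℝ A (t • Z) Z Z) :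
    ‖Z‖ * (φ ‖Z‖ - φ 0) ≤ (A Z - A 0) Z := by
  have hφray (t : ℝ) (ht : 0 ≤ t) :
      HasDerivAt (fun s => ‖Z‖ * φ (s * ‖Z‖)) (w (t * ‖Z‖) * ‖Z‖ ^ 2) t := by
    have hscale : HasDerivAt (fun s : ℝ => s * ‖Z‖) ‖Z‖ t := hasDerivAt_mul_const ‖Z‖
    exact (((hφ _ (by positivity)).comp t hscale).const_mul ‖Z‖).congr_deriv (by ring)
  have hdiff (t : ℝ) (ht : 0 ≤ t) :=
    (hasDerivAt_apply_smul (hA (t • Z)) Z).sub (hφray t ht)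
  have hmono : MonotoneOn (fun t : ℝ => A (t • Z) Z - ‖Z‖ * φ (t * ‖Z‖)) (Set.Icc 0 1) := by
    refine monotoneOn_of_hasDerivWithinAt_nonneg (convex_Icc 0 1)
      (fun t ht => (hdiff t ht.1).continuousAt.continuousWithinAt)
      (fun t ht => (hdiff t (interior_subset ht).1).hasDerivWithinAt) (fun t ht => ?_)
    rw [interior_Icc] at ht
    exact sub_nonneg.2 (hw t ht)
  have hends := hmono (Set.left_mem_Icc.2 zero_le_one) (Set.right_mem_Icc.2 zero_le_one)
    zero_le_one
  simp only [zero_smul, zero_mul, one_smul, one_mul] at hends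
  rw [sub_apply]
  linarith

theorem statement4_general {lam μ : ℝ} (hlam : 0 < lam) (hμ : μ ≠ 1) (hA : Differentiable ℝ A)
    (hell : ∀ Z Y : E, lam * (1 + ‖Z‖) ^ (-μ) * ‖Y‖ ^ 2 ≤ fderiv ℝ A Z Y Y)
    {ε : ℝ} (hε : 0 < ε) (Z : E) :
    ‖Z‖ ≤ ε + (ellipticityModulus lam μ ε)⁻¹ * (A Z - A 0) Z := by
  have hmono : StrictMonoOn (ellipticityModulus lam μ) (Set.Ici 0) :=
    (strictMonoOn_ellipticityModulus hlam hμ).mono (Set.Ici_subset_Ioi.2 neg_one_lt_zero)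
  have hpos : 0 < ellipticityModulus lam μ ε :=
    ellipticityModulus_zero.symm.trans_lt (hmono Set.self_mem_Ici hε.le hε)
  have hkey : ‖Z‖ * ellipticityModulus lam μ ‖Z‖ ≤ (A Z - A 0) Z := by
    simpa only [ellipticityModulus_zero, sub_zero] using norm_mul_sub_le_sub_apply hA
      (fun r hr => hasDerivAt_ellipticityModulus hμ (neg_one_lt_zero.trans_le hr))
      (fun t ht => by simpa only [norm_smul, Real.norm_of_nonneg ht.1.le] using hell (t • Z) Z)
  exact le_add_inv_mul_of_mul_le hmono.monotoneOn ellipticityModulus_zero.ge hε.le hpos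
    (norm_nonneg Z) hkey

end EllipticField

/-- auxiliary Lemma: if `F ∈ C²(ℝ^{2N})` satisfies the `μ`-ellipticity
lower bound, and `θ(r) = (λ/(μ−1))[1 − (1+r)^{1−μ}]`, then for every `ε > 0` and
every `Z` one has `|Z| ≤ ε + θ(ε)⁻¹ (∇F(Z) − ∇F(0)) : Z`. -/
theorem statement4 {N : ℕ} (F : EuclideanSpace ℝ (Fin N × Fin 2) → ℝ)
    (lam μ : ℝ) (hlam : 0 < lam) (hμ : 1 < μ)
    (hF : ContDiff ℝ 2 F)
    (hell : ∀ Z Y : EuclideanSpace ℝ (Fin N × Fin 2),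
      lam * (1 + ‖Z‖) ^ (-μ) * ‖Y‖ ^ 2 ≤ iteratedFDeriv ℝ 2 F Z ![Y, Y])
    (θ : ℝ → ℝ) (hθ : ∀ r : ℝ, 0 ≤ r → θ r = lam / (μ - 1) * (1 - (1 + r) ^ (1 - μ))) :
    ∀ ε : ℝ, 0 < ε → ∀ Z : EuclideanSpace ℝ (Fin N × Fin 2),
      ‖Z‖ ≤ ε + (θ ε)⁻¹ * ⟪gradient F Z - gradient F 0, Z⟫ := by
  intro ε hε Z
  rw [hθ ε hε.le, inner_sub_left, inner_gradient_left, inner_gradient_left, ← sub_apply]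
  exact statement4_general hlam hμ.ne' ((hF.fderiv_right le_rfl).differentiable one_ne_zero)
    (fun X Y => by simpa [iteratedFDeriv_two_apply] using hell X Y) hε Z
end

section
/- Let g ∈ C²([0,∞)) satisfy g'(0) = 0, g''(t) > 0 for t > 0, and the linear growth bounds a₁t − a₂ ≤ g(t) ≤ a₃t + a₄ for all t ≥ 0 (with a₁, a₃ > 0, a₂, a₄ ≥ 0). Define f(t) := g(√t) and λ(t) := 2f''(t)/f'(t) for t > 0. Then the Nitsche integral is finite: ∫₁^∞ [(1 + tλ(t))/(2 + tλ(t))] · (1/t) dt < ∞. -/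
open MeasureTheory

/-!
With `h(t) = g'(√t) = 2√t f'(t)`, differentiating `log h` gives
`1 + tλ(t) = √t g''(√t)/g'(√t) = 2t (log h)'(t)`. This is nonnegative, so the Nitsche integrand is
at most `(1 + tλ(t))/t = 2 (log h)'(t)`. A convex function of linear growth has a bounded
derivative; hence `log h` is monotone and bounded, and its derivative is integrable at infinity.
-/

open Filter Set Topology

lemma integrableOn_Ioi_deriv_of_monotoneOn {φ : ℝ → ℝ} {a : ℝ}
    (hcont : ContinuousWithinAt φ (Ici a) a) (hdiff : DifferentiableOn ℝ φ (Ioi a))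
    (hmono : MonotoneOn φ (Ici a)) (hbdd : BddAbove (φ '' Ici a)) :
    IntegrableOn (deriv φ) (Ioi a) := by
  have hmono_max : Monotone fun t => φ (max a t) := fun s t hst =>
    hmono (le_max_left a s) (le_max_left a t) (max_le_max_left a hst)
  have hbdd_max : BddAbove (range fun t => φ (max a t)) :=
    hbdd.mono (range_subset_iff.2 fun t => mem_image_of_mem φ (le_max_left a t))
  have hlim : Tendsto φ atTop (𝓝 (⨆ t, φ (max a t))) := by
    refine (tendsto_atTop_ciSup hmono_max hbdd_max).congr' ?_
    filter_upwards [eventually_ge_atTop a] with t ht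
    rw [max_eq_right ht]
  refine integrableOn_Ioi_deriv_of_nonneg hcont
    (fun t ht => (hdiff.differentiableAt (Ioi_mem_nhds ht)).hasDerivAt) (fun t ht => ?_) hlim
  rw [← derivWithin_of_isOpen isOpen_Ioi ht]
  exact (hmono.mono Ioi_subset_Ici_self).derivWithin_nonneg

lemma integrableOn_Ioi_logDeriv_of_monotoneOn {h : ℝ → ℝ} {a : ℝ}
    (hcont : ContinuousWithinAt h (Ici a) a) (hdiff : DifferentiableOn ℝ h (Ioi a))
    (hmono : MonotoneOn h (Ici a)) (hpos : 0 < h a) (hbdd : BddAbove (h '' Ici a)) :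
    IntegrableOn (logDeriv h) (Ioi a) := by
  have hpos' : ∀ t ∈ Ici a, 0 < h t := fun t ht => hpos.trans_le (hmono self_mem_Ici ht ht)
  have hlog_mono : MonotoneOn (Real.log ∘ h) (Ici a) := fun s hs t ht hst =>
    Real.log_le_log (hpos' s hs) (hmono hs ht hst)
  have hlog_bdd : BddAbove ((Real.log ∘ h) '' Ici a) := by
    obtain ⟨M, hM⟩ := hbdd
    refine ⟨Real.log M, ?_⟩
    rintro _ ⟨t, ht, rfl⟩
    exact Real.log_le_log (hpos' t ht) (hM (mem_image_of_mem h ht))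
  refine (integrableOn_Ioi_deriv_of_monotoneOn (hcont.log hpos.ne')
    (hdiff.log fun t ht => (hpos' t (Ioi_subset_Ici_self ht)).ne') hlog_mono hlog_bdd).congr_fun
    (fun t ht => ?_) measurableSet_Ioi
  exact Real.deriv_log_comp_eq_logDeriv (hdiff.differentiableAt (Ioi_mem_nhds ht))
    (hpos' t (Ioi_subset_Ici_self ht)).ne'

lemma deriv_le_of_convexOn_of_eventually_le_affine {S : Set ℝ} {g : ℝ → ℝ} {a b s : ℝ}
    (hS : S ∈ atTop) (hconv : ConvexOn ℝ S g) (hs : s ∈ S) (hdiff : DifferentiableAt ℝ g s)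
    (hgrow : ∀ᶠ t in atTop, g t ≤ a * t + b) : deriv g s ≤ a := by
  have hlim : Tendsto (fun t => a + (a * s + b - g s) / (t - s)) atTop (𝓝 a) := by
    simpa only [add_zero, id_eq, ← sub_eq_add_neg] using
      ((tendsto_atTop_add_const_right atTop (-s) tendsto_id).const_div_atTop
        (a * s + b - g s)).const_add a
  refine ge_of_tendsto hlim ?_
  filter_upwards [hS, hgrow, eventually_gt_atTop s] with t htS ht hst
  calc deriv g s ≤ slope g s t := hconv.deriv_le_slope hs htS hst hdiff
    _ = (g t - g s) / (t - s) := slope_def_field g s t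
    _ ≤ (a * t + b - g s) / (t - s) := by gcongr
    _ = a + (a * s + b - g s) / (t - s) := by field_simp; ring

lemma integrable_div_one_add_mul {α : Type*} [MeasurableSpace α] {μ : Measure α} {u w : α → ℝ}
    (hu : AEStronglyMeasurable u μ) (hu_nonneg : 0 ≤ᵐ[μ] u)
    (huw : Integrable (fun x => u x * w x) μ) :
    Integrable (fun x => u x / (1 + u x) * w x) μ := by
  have hmeas : AEStronglyMeasurable (fun x => (1 + u x)⁻¹) μ :=
    (hu.aemeasurable.const_add 1).inv.aestronglyMeasurable
  have hbound : ∀ᵐ x ∂μ, ‖(1 + u x)⁻¹‖ ≤ 1 := by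
    filter_upwards [hu_nonneg] with x (hx : 0 ≤ u x)
    rw [Real.norm_of_nonneg (by positivity)]
    exact inv_le_one_of_one_le₀ (le_add_of_nonneg_right hx)
  refine (huw.bdd_mul hmeas hbound).congr (.of_forall fun x => ?_)
  ring

lemma hasDerivAt_comp_sqrt {φ : ℝ → ℝ} {t : ℝ} (ht : 0 < t) (hφ : DifferentiableAt ℝ φ (√t)) :
    HasDerivAt (fun x => φ (√x)) (deriv φ (√t) / (2 * √t)) t := by
  simpa only [mul_one_div, Function.comp_def] using
    hφ.hasDerivAt.comp t (Real.hasDerivAt_sqrt ht.ne')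

lemma logDeriv_comp_sqrt {φ : ℝ → ℝ} {t : ℝ} (ht : 0 < t) (hφ : DifferentiableAt ℝ φ (√t)) :
    logDeriv (fun x => φ (√x)) t = logDeriv φ (√t) / (2 * √t) := by
  rw [logDeriv_apply, (hasDerivAt_comp_sqrt ht hφ).deriv, div_right_comm, ← logDeriv_apply]

lemma logDeriv_sqrt {t : ℝ} (ht : 0 < t) : logDeriv Real.sqrt t = 1 / (2 * t) := by
  rw [logDeriv_apply, (Real.hasDerivAt_sqrt ht.ne').deriv, div_div, mul_assoc,
    Real.mul_self_sqrt ht.le]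

lemma logDeriv_deriv_comp_sqrt {g : ℝ → ℝ} {t : ℝ} (ht : 0 < t)
    (hg : ∀ᶠ s in 𝓝 (√t), DifferentiableAt ℝ g s) (hg' : DifferentiableAt ℝ (deriv g) (√t))
    (hne : deriv g (√t) ≠ 0) :
    logDeriv (deriv fun x => g (√x)) t =
      logDeriv (deriv g) (√t) / (2 * √t) - 1 / (2 * t) := by
  have hderiv : deriv (fun x => g (√x)) =ᶠ[𝓝 t] fun x => deriv g (√x) / (2 * √x) := by
    filter_upwards [Ioi_mem_nhds ht, Real.continuous_sqrt.continuousAt.eventually hg]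
      with x hx hgx
    exact (hasDerivAt_comp_sqrt hx hgx).deriv
  have hsqrt : DifferentiableAt ℝ Real.sqrt t := (Real.hasDerivAt_sqrt ht.ne').differentiableAt
  rw [(logDeriv_congr_nhds hderiv).eq_of_nhds,
    logDeriv_div t hne (by positivity) (hasDerivAt_comp_sqrt ht hg').differentiableAt
      (hsqrt.const_mul 2),
    logDeriv_const_mul t 2 two_ne_zero, logDeriv_sqrt ht, logDeriv_comp_sqrt ht hg']

lemma one_add_mul_two_mul_logDeriv_deriv_comp_sqrt {g : ℝ → ℝ} {t : ℝ} (ht : 0 < t)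
    (hg : ∀ᶠ s in 𝓝 (√t), DifferentiableAt ℝ g s) (hg' : DifferentiableAt ℝ (deriv g) (√t))
    (hne : deriv g (√t) ≠ 0) :
    1 + t * (2 * logDeriv (deriv fun x => g (√x)) t) = √t * logDeriv (deriv g) (√t) := by
  have ht_sq : t = √t ^ 2 := (Real.sq_sqrt ht.le).symm
  rw [logDeriv_deriv_comp_sqrt ht hg hg' hne]
  field_simp
  linear_combination logDeriv (deriv g) (√t) * ht_sq

lemma integrableOn_Ioi_logDeriv_deriv_comp_sqrt {g : ℝ → ℝ} {a b c : ℝ} (hc : 0 < c)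
    (hg : DifferentiableOn ℝ g (Ioi 0)) (hg' : DifferentiableOn ℝ (deriv g) (Ioi 0))
    (hconv : ConvexOn ℝ (Ioi 0) g) (hpos : 0 < deriv g (√c))
    (hgrow : ∀ᶠ t in atTop, g t ≤ a * t + b) :
    IntegrableOn (logDeriv fun t => deriv g (√t)) (Ioi c) := by
  have hdiff : ∀ t ∈ Ioi (0 : ℝ), DifferentiableAt ℝ g t := fun t ht =>
    hg.differentiableAt (Ioi_mem_nhds ht)
  have hsqrt : ∀ t ∈ Ici c, √t ∈ Ioi 0 := fun t ht => Real.sqrt_pos.2 (hc.trans_le ht)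
  have hdiff_comp : ∀ t ∈ Ici c, DifferentiableAt ℝ (fun t => deriv g (√t)) t := fun t ht =>
    (hasDerivAt_comp_sqrt (hc.trans_le ht)
      (hg'.differentiableAt (Ioi_mem_nhds (hsqrt t ht)))).differentiableAt
  have hmono : MonotoneOn (fun t => deriv g (√t)) (Ici c) := fun s hs t ht hst =>
    hconv.monotoneOn_deriv hdiff (hsqrt s hs) (hsqrt t ht) (Real.sqrt_le_sqrt hst)
  have hbdd : BddAbove ((fun t => deriv g (√t)) '' Ici c) := by
    refine ⟨a, ?_⟩
    rintro _ ⟨t, ht, rfl⟩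
    exact deriv_le_of_convexOn_of_eventually_le_affine (Ioi_mem_atTop 0) hconv (hsqrt t ht)
      (hdiff _ (hsqrt t ht)) hgrow
  exact integrableOn_Ioi_logDeriv_of_monotoneOn
    (hdiff_comp c self_mem_Ici).continuousAt.continuousWithinAt
    (fun t ht => (hdiff_comp t (Ioi_subset_Ici_self ht)).differentiableWithinAt) hmono hpos hbdd

lemma pos_of_deriv_pos_of_nonneg {φ : ℝ → ℝ} {a t : ℝ} (hcont : ContinuousOn φ (Ici a))
    (hderiv : ∀ s, a < s → 0 < deriv φ s) (ha : 0 ≤ φ a) (ht : a < t) : 0 < φ t := by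
  have hmono : StrictMonoOn φ (Ici a) := strictMonoOn_of_deriv_pos (convex_Ici a) hcont
    fun s hs => hderiv s (by rwa [interior_Ici] at hs)
  exact ha.trans_lt (hmono self_mem_Ici (Ioi_subset_Ici_self ht) ht)

theorem statement19_general {g f lam : ℝ → ℝ} {a b c : ℝ} (hc : 0 < c)
    (hg : DifferentiableOn ℝ g (Ioi 0)) (hg' : DifferentiableOn ℝ (deriv g) (Ioi 0))
    (hpos : ∀ t, 0 < t → 0 < deriv g t) (hg'' : ∀ t, 0 < t → 0 ≤ deriv (deriv g) t)
    (hgrow : ∀ᶠ t in atTop, g t ≤ a * t + b)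
    (hf : ∀ t, f t = g (√t))
    (hlam : ∀ t, 0 < t → lam t = 2 * deriv (deriv f) t / deriv f t) :
    IntegrableOn (fun t => (1 + t * lam t) / (2 + t * lam t) * (1 / t)) (Ici c) := by
  obtain rfl : f = fun t => g (√t) := funext hf
  let u : ℝ → ℝ := fun t => √t * logDeriv (deriv g) (√t)
  have hdiff : ∀ s, 0 < s → DifferentiableAt ℝ (deriv g) s := fun s hs =>
    hg'.differentiableAt (Ioi_mem_nhds hs)
  have hlam_eq : ∀ t, 0 < t → 1 + t * lam t = u t := fun t ht => by
    have hs : 0 < √t := Real.sqrt_pos.2 ht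
    rw [hlam t ht, mul_div_assoc]
    exact one_add_mul_two_mul_logDeriv_deriv_comp_sqrt ht
      (hg.eventually_differentiableAt (Ioi_mem_nhds hs)) (hdiff _ hs) (hpos _ hs).ne'
  have hu_meas : Measurable u := Real.continuous_sqrt.measurable.mul
    (((measurable_deriv _).div (measurable_deriv g)).comp Real.continuous_sqrt.measurable)
  have hu_nonneg : ∀ t, 0 < t → 0 ≤ u t := fun t ht =>
    have hs : 0 < √t := Real.sqrt_pos.2 ht
    mul_nonneg hs.le (div_nonneg (hg'' _ hs) (hpos _ hs).le)
  have hconv : ConvexOn ℝ (Ioi 0) g := convexOn_of_deriv2_nonneg' (convex_Ioi 0) hg hg' hg''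
  have hu_int : IntegrableOn (fun t => u t * (1 / t)) (Ioi c) := by
    refine IntegrableOn.congr_fun ((integrableOn_Ioi_logDeriv_deriv_comp_sqrt hc hg hg' hconv
      (hpos _ (Real.sqrt_pos.2 hc)) hgrow).const_mul 2) (fun t ht => ?_) measurableSet_Ioi
    have ht0 : 0 < t := hc.trans ht
    simp only [u]
    rw [logDeriv_comp_sqrt ht0 (hdiff _ (Real.sqrt_pos.2 ht0))]
    field_simp
    rw [Real.sq_sqrt ht0.le]
  rw [integrableOn_Ici_iff_integrableOn_Ioi]
  refine IntegrableOn.congr_fun (integrable_div_one_add_mul hu_meas.aestronglyMeasurable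
    (ae_restrict_of_forall_mem measurableSet_Ioi fun t ht => hu_nonneg t (hc.trans ht))
    hu_int) (fun t ht => ?_) measurableSet_Ioi
  rw [← hlam_eq t (hc.trans ht)]
  ring

/-- failure of the Nitsche criterion for linear growth densities.
With `f(t) = g(√t)` and `λ(t) = 2f''(t)/f'(t)`, the Nitsche integral
`∫₁^∞ [(1 + tλ(t))/(2 + tλ(t))]·(1/t) dt` is finite. -/
theorem statement19 (g : ℝ → ℝ) (hg : ContDiff ℝ 2 g)
    (a₁ a₂ a₃ a₄ : ℝ) (ha₁ : 0 < a₁) (ha₂ : 0 ≤ a₂) (ha₃ : 0 < a₃) (ha₄ : 0 ≤ a₄)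
    (hg'0 : deriv g 0 = 0)
    (hg'' : ∀ t : ℝ, 0 < t → 0 < deriv (deriv g) t)
    (hgrow : ∀ t : ℝ, 0 ≤ t → a₁ * t - a₂ ≤ g t ∧ g t ≤ a₃ * t + a₄)
    (f lam : ℝ → ℝ)
    (hf : ∀ t : ℝ, f t = g (Real.sqrt t))
    (hlam : ∀ t : ℝ, 0 < t → lam t = 2 * deriv (deriv f) t / deriv f t) :
    IntegrableOn (fun t : ℝ => (1 + t * lam t) / (2 + t * lam t) * (1 / t))
      (Set.Ici 1) volume := by
  have hpos : ∀ t, 0 < t → 0 < deriv g t := fun t ht =>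
    pos_of_deriv_pos_of_nonneg hg.differentiable_deriv_two.continuous.continuousOn hg'' hg'0.ge ht
  exact statement19_general one_pos (hg.differentiable two_ne_zero).differentiableOn
    hg.differentiable_deriv_two.differentiableOn hpos (fun t ht => (hg'' t ht).le)
    ((eventually_ge_atTop 0).mono fun t ht => (hgrow t ht).2) hf hlam
end
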